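/- arXiv:2101.09950 — 4 statements merged into one kernel-verified Lean document; each statement's English description precedes it below -/
import Mathlib

section
/- For every infinite cardinal λ there exists a unital real Banach algebra A having a dense subset of cardinality at most 2^λ such that for every real Banach space E having a dense subset of cardinality at most λ, A is not isomorphic as a ring to the Calkin algebra B(E)/K(E). -/
open Cardinal

/-- The two-sided ideal of compact operators in `B(E)`, the algebra of bounded linear
operators on `E`. -/
def compactIdeal (𝕜 : Type*) [NontriviallyNormedField 𝕜]
    (E : Type*) [NormedAddCommGroup E] [NormedSpace 𝕜 E] : TwoSidedIdeal (E →L[𝕜] E) :=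
  TwoSidedIdeal.mk' {f : E →L[𝕜] E | IsCompactOperator f}
    isCompactOperator_zero
    (fun hf hg => hf.add hg)
    (fun hf => hf.neg)
    (fun {f _} hg => hg.clm_comp f)
    (fun {_ g} hf => hf.comp_clm g)

/-- The Calkin algebra `B(E)/K(E)`, as a quotient ring. -/
def Calkin (𝕜 : Type*) [NontriviallyNormedField 𝕜]
    (E : Type*) [NormedAddCommGroup E] [NormedSpace 𝕜 E] : Type _ :=
  (compactIdeal 𝕜 E).ringCon.Quotient

noncomputable instance (𝕜 : Type*) [NontriviallyNormedField 𝕜]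
    (E : Type*) [NormedAddCommGroup E] [NormedSpace 𝕜 E] : Ring (Calkin 𝕜 E) :=
  inferInstanceAs (Ring (compactIdeal 𝕜 E).ringCon.Quotient)

/-- A bundled unital real Banach algebra. -/
structure BundledBanachAlgebra : Type (u + 1) where
  carrier : Type u
  [normedRing : NormedRing carrier]
  [normedAlgebra : NormedAlgebra ℝ carrier]
  [complete : CompleteSpace carrier]

attribute [instance] BundledBanachAlgebra.normedRing BundledBanachAlgebra.normedAlgebra
  BundledBanachAlgebra.complete

namespace CalkinCounting

open Cardinal Filter Topology BoundedContinuousFunction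

universe v w

section Alg

set_option linter.unusedSectionVars false

variable {X : Type v} [TopologicalSpace X] [DiscreteTopology X] {ι : Type v}

/-- Bounded functions on `X` whose difference along `y` and `z` tends to zero. -/
noncomputable def alg (l : Filter ι) (y z : ι → X) : Subalgebra ℝ (X →ᵇ ℝ) where
  carrier := {f | Tendsto (fun a => f (y a) - f (z a)) l (𝓝 0)}
  mul_mem' := by
    intro f g hf hg
    simp only [Set.mem_ofPred_eq] at *
    have h1 : Tendsto (fun a => (f (y a) - f (z a)) * g (y a)) l (𝓝 0) := by
      apply hf.zero_mul_isBoundedUnder_le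
      exact isBoundedUnder_of ⟨‖g‖, fun a => g.norm_coe_le_norm _⟩
    have h2 : Tendsto (fun a => (g (y a) - g (z a)) * f (z a)) l (𝓝 0) := by
      apply hg.zero_mul_isBoundedUnder_le
      exact isBoundedUnder_of ⟨‖f‖, fun a => f.norm_coe_le_norm _⟩
    have h3 := h1.add h2
    rw [add_zero] at h3
    refine h3.congr fun a => ?_
    simp only [BoundedContinuousFunction.coe_mul, Pi.mul_apply]
    ring
  add_mem' := by
    intro f g hf hg
    simp only [Set.mem_ofPred_eq] at *
    have h3 := hf.add hg
    rw [add_zero] at h3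
    refine h3.congr fun a => ?_
    simp only [BoundedContinuousFunction.coe_add, Pi.add_apply]
    ring
  algebraMap_mem' := by
    intro r
    simpa [BoundedContinuousFunction.algebraMap_apply] using! tendsto_const_nhds


theorem mem_alg {l : Filter ι} {y z : ι → X} {f : X →ᵇ ℝ} :
    f ∈ alg l y z ↔ Tendsto (fun a => f (y a) - f (z a)) l (𝓝 0) := Iff.rfl

theorem isClosed_alg (l : Filter ι) (y z : ι → X) :
    IsClosed (alg l y z : Set (X →ᵇ ℝ)) := by
  rw [← closure_subset_iff_isClosed]
  intro f hf
  rw [Metric.mem_closure_iff] at hf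
  change Tendsto _ _ _
  rw [Metric.tendsto_nhds]
  intro ε hε
  obtain ⟨g, hg, hfg⟩ := hf (ε / 3) (by positivity)
  have hg' : Tendsto (fun a => g (y a) - g (z a)) l (𝓝 0) := hg
  rw [Metric.tendsto_nhds] at hg'
  filter_upwards [hg' (ε / 3) (by positivity)] with a ha
  have h1 := (BoundedContinuousFunction.dist_coe_le_dist (f := f) (g := g) (y a)).trans_lt hfg
  have h2 := (BoundedContinuousFunction.dist_coe_le_dist (f := f) (g := g) (z a)).trans_lt hfg
  rw [Real.dist_eq, abs_lt] at *
  constructor <;> linarith [ha.1, ha.2, h1.1, h1.2, h2.1, h2.2]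

/-- The indicator function of a set, as a bounded function. -/
noncomputable def ind (s : Set X) : X →ᵇ ℝ :=
  BoundedContinuousFunction.ofNormedAddCommGroupDiscrete (s.indicator 1) 1 (by
    intro x
    by_cases h : x ∈ s <;> simp [h])

theorem ind_apply (s : Set X) (x : X) : ind s x = s.indicator 1 x := rfl

theorem ind_mem {l : Filter ι} {y z : ι → X} (i : X) (hy : ∀ᶠ a in l, y a ≠ i)
    (hz : ∀ᶠ a in l, z a ≠ i) : ind {i} ∈ alg l y z := by
  rw [mem_alg]
  refine (tendsto_const_nhds (x := (0 : ℝ))).congr' ?_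
  filter_upwards [hy, hz] with a h1 h2
  simp [ind_apply, h1, h2]

/-- A ring homomorphism between subalgebras fixing point indicators fixes everything. -/
theorem rigid (A B : Subalgebra ℝ (X →ᵇ ℝ)) (hA : ∀ i, ind {i} ∈ A)
    (hB : ∀ i, ind {i} ∈ B) (ψ : A →+* B)
    (hψ : ∀ i, ψ ⟨ind {i}, hA i⟩ = ⟨ind {i}, hB i⟩) : A ≤ B := by
  intro f hf
  have key : ((ψ ⟨f, hf⟩ : B) : X →ᵇ ℝ) = f := by
    ext i
    let e : A := ⟨ind {i}, hA i⟩
    have hee : e * e = e := by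
      apply Subtype.ext
      ext x
      by_cases h : x = i <;> simp [e, ind_apply, h]
    have he1 : ((ψ e : B) : X →ᵇ ℝ) i = 1 := by
      simp [e, hψ, ind_apply]
    let ρ : ℝ →+* ℝ :=
      { toFun := fun r => ((ψ (r • e) : B) : X →ᵇ ℝ) i
        map_one' := by rw [one_smul, he1]
        map_mul' := by
          intro r s
          have : (r * s) • e = (r • e) * (s • e) := by
            rw [smul_mul_smul_comm, hee]
          rw [this, RingHom.map_mul ψ]
          rfl
        map_zero' := by rw [zero_smul, RingHom.map_zero ψ]; rfl
        map_add' := by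
          intro r s
          rw [add_smul, RingHom.map_add ψ]
          rfl }
    have hρ : ρ = RingHom.id ℝ := Subsingleton.elim _ _
    have hfe : (⟨f, hf⟩ : A) * e = f i • e := by
      apply Subtype.ext
      ext x
      by_cases h : x = i
      · subst h; simp [e, ind_apply]
      · simp [e, ind_apply, h]
    have h1 : ((ψ (⟨f, hf⟩ * e) : B) : X →ᵇ ℝ) i = ((ψ ⟨f, hf⟩ : B) : X →ᵇ ℝ) i := by
      rw [map_mul]
      simp [he1]
    rw [← h1, hfe]
    exact congrArg (fun g : ℝ →+* ℝ => g (f i)) hρ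
  rw [← key]
  exact (ψ ⟨f, hf⟩).2

end Alg

section Comb

variable (L : Type v)

/-- The index set. -/
abbrev Idx := (Finset L × Finset (Finset L)) × ℕ

theorem exists_sep (S : Set (Set L)) (t : Finset (Set L)) :
    ∃ x : Finset L × Finset (Finset L), ∀ T ∈ t, 
      ((∃ G ∈ x.2, ∀ a ∈ x.1, a ∈ G ↔ a ∈ T) ↔ T ∈ S) := by
  classical
  have hsep : ∀ p : Set L × Set L, ∃ a : Option L, p.1 ≠ p.2 → ∃ b, a = some b ∧ 
      ¬ (b ∈ p.1 ↔ b ∈ p.2) := by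
    intro p
    by_cases h : p.1 = p.2
    · exact ⟨none, fun h' => (h' h).elim⟩
    · have : ∃ b, ¬ (b ∈ p.1 ↔ b ∈ p.2) := by
        by_contra hc
        push Not at hc
        exact h (Set.ext hc)
      obtain ⟨b, hb⟩ := this
      exact ⟨some b, fun _ => ⟨b, rfl, hb⟩⟩
  choose w hw using hsep
  let F : Finset L := (t ×ˢ t).biUnion fun p => (w p).toFinset
  refine ⟨(F, (t.filter (· ∈ S)).image fun T => F.filter (· ∈ T)), ?_⟩
  intro T hT
  constructor
  · rintro ⟨G, hG, hGT⟩
    simp only [Finset.mem_image, Finset.mem_filter] at hG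
    obtain ⟨T', ⟨hT't, hT'S⟩, rfl⟩ := hG
    by_cases h : T' = T
    · rwa [← h]
    · exfalso
      obtain ⟨b, hb, hbn⟩ := hw (T', T) h
      have hbF : b ∈ F := by
        simp only [F, Finset.mem_biUnion]
        exact ⟨(T', T), Finset.mk_mem_product hT't hT, by simp [hb]⟩
      apply hbn
      have := hGT b hbF
      simpa [hbF] using this
  · intro hTS
    refine ⟨F.filter (· ∈ T), ?_, ?_⟩
    · simp only [Finset.mem_image, Finset.mem_filter]
      exact ⟨T, ⟨hT, hTS⟩, rfl⟩
    · intro a ha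
      simp [ha]

/-- The independent family. -/
def ii (T : Set L) : Set (Idx L) := {x | ∃ G ∈ x.1.2, ∀ a ∈ x.1.1, a ∈ G ↔ a ∈ T}

/-- The net attached to `S`. -/
noncomputable def net (S : Set (Set L)) (a : Finset (Set L) × ℕ) : Idx L :=
  ((exists_sep L S a.1).choose, a.2)

theorem net_mem (S : Set (Set L)) (T : Set L) :
    ∀ᶠ a in atTop, (net L S a ∈ ii L T ↔ T ∈ S) := by
  filter_upwards [eventually_ge_atTop (({T} : Finset (Set L)), 0)] with a ha
  exact (exists_sep L S a.1).choose_spec T (ha.1 (Finset.mem_singleton_self T))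

theorem net_ne (S : Set (Set L)) (i : Idx L) : ∀ᶠ a in atTop, net L S a ≠ i := by
  filter_upwards [eventually_ge_atTop ((∅ : Finset (Set L)), i.2 + 1)] with a ha h
  have h1 : a.2 = i.2 := congrArg Prod.snd h
  have h2 : i.2 + 1 ≤ a.2 := ha.2
  omega

instance idxTop : TopologicalSpace (Idx L) := ⊥

instance idxDisc : DiscreteTopology (Idx L) := ⟨rfl⟩

/-- The algebra attached to `S`. -/
noncomputable def AS (S : Set (Set L)) : Subalgebra ℝ (Idx L →ᵇ ℝ) :=
  alg atTop (net L S) (net L ∅)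

theorem ind_mem_AS (S : Set (Set L)) (i : Idx L) : ind {i} ∈ AS L S :=
  ind_mem i (net_ne L S i) (net_ne L ∅ i)

theorem ii_mem_AS (S : Set (Set L)) (T : Set L) : ind (ii L T) ∈ AS L S ↔ T ∉ S := by
  have h : ∀ᶠ a in atTop, ind (ii L T) (net L S a) - ind (ii L T) (net L ∅ a) =
      S.indicator (1 : Set L → ℝ) T := by
    filter_upwards [net_mem L S T, net_mem L ∅ T] with a h1 h2
    have h2' : net L ∅ a ∉ ii L T := by simpa using h2
    by_cases hT : T ∈ S
    · have h1' : net L S a ∈ ii L T := h1.2 hT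
      simp [ind_apply, h1', h2', hT]
    · have h1' : net L S a ∉ ii L T := fun h => hT (h1.1 h)
      simp [ind_apply, h1', h2', hT]
  unfold AS
  rw [mem_alg, tendsto_congr' h, tendsto_const_nhds_iff]
  by_cases hT : T ∈ S <;> simp [hT]

theorem AS_anti {S S' : Set (Set L)} (h : AS L S ≤ AS L S') : S' ⊆ S := by
  intro T hT
  by_contra hc
  exact (ii_mem_AS L S' T).1 (h ((ii_mem_AS L S T).2 hc)) hT

end Comb

section Spaces

/-- The quotient map. -/
noncomputable def cmk (E : Type*) [NormedAddCommGroup E] [NormedSpace ℝ E] :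
    (E →L[ℝ] E) →+* Calkin ℝ E := (compactIdeal ℝ E).ringCon.mk'

theorem cmk_surjective (E : Type*) [NormedAddCommGroup E] [NormedSpace ℝ E] :
    Function.Surjective (cmk E) := (compactIdeal ℝ E).ringCon.mk'_surjective

theorem mem_compactIdeal {E : Type*} [NormedAddCommGroup E] [NormedSpace ℝ E] (f : E →L[ℝ] E) :
    f ∈ compactIdeal ℝ E ↔ IsCompactOperator f := by
  exact TwoSidedIdeal.mem_mk' _ _ _ _ _ _ f

theorem cmk_eq {E : Type*} [NormedAddCommGroup E] [NormedSpace ℝ E] (f g : E →L[ℝ] E) :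
    cmk E f = cmk E g ↔ IsCompactOperator (f - g) := by
  have h : cmk E f = cmk E g ↔ (compactIdeal ℝ E).ringCon f g := RingCon.eq _
  rw [h, TwoSidedIdeal.rel_iff, mem_compactIdeal]

variable {E E' : Type*} [NormedAddCommGroup E] [NormedSpace ℝ E] [NormedAddCommGroup E']
  [NormedSpace ℝ E']

theorem exists_hom (e : E ≃L[ℝ] E') :
    ∃ Θ : Calkin ℝ E →+* Calkin ℝ E',
      ∀ f, Θ (cmk E f) = cmk E' (e.conjContinuousAlgEquiv f) := by
  let g : (E →L[ℝ] E) →+* Calkin ℝ E' :=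
    (cmk E').comp (e.conjContinuousAlgEquiv : (E →L[ℝ] E) →+* (E' →L[ℝ] E'))
  refine ⟨(compactIdeal ℝ E).ringCon.lift g ?_, fun f => rfl⟩
  intro f f' hff
  have hc : IsCompactOperator (f - f') := (cmk_eq f f').1 ((RingCon.eq _).2 hff)
  change cmk E' (e.conjContinuousAlgEquiv f) = cmk E' (e.conjContinuousAlgEquiv f')
  rw [cmk_eq]
  have h2 := (hc.comp_clm (e.symm : E' →L[ℝ] E)).clm_comp (e : E →L[ℝ] E')
  have heq : (⇑(e.conjContinuousAlgEquiv f - e.conjContinuousAlgEquiv f') : E' → E') =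
      ⇑(e : E →L[ℝ] E') ∘ (⇑(f - f') ∘ ⇑(e.symm : E' →L[ℝ] E)) := by
    funext x
    simp
  rw [heq]
  exact h2

theorem exists_isometry {J : Type*} [CompleteSpace E] [CompleteSpace E'] (p : J → E) (q : J → E')
    (hp : DenseRange p) (hq : DenseRange q) (h : ∀ a b, dist (p a) (p b) = dist (q a) (q b)) :
    ∃ Φ : E ≃ᵢ E', ∀ a, Φ (p a) = q a := by
  let _ : PseudoMetricSpace J := PseudoMetricSpace.induced p inferInstance
  have ip : Isometry p := Isometry.of_dist_eq fun a b => rfl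
  have iq : Isometry q := Isometry.of_dist_eq fun a b => (h a b).symm
  let P : AbstractCompletion J := ⟨E, p, inferInstance, inferInstance, inferInstance,
    ip.isUniformInducing, hp⟩
  let Q : AbstractCompletion J := ⟨E', q, inferInstance, inferInstance, inferInstance,
    iq.isUniformInducing, hq⟩
  let Ψ : E ≃ᵤ E' := P.compareEquiv Q
  have hΨ : ∀ a, Ψ (p a) = q a := fun a => P.compare_coe Q a
  have hiso : Isometry Ψ := by
    refine Isometry.of_dist_eq fun x y => ?_
    refine hp.induction_on₂ (p := fun x y => dist (Ψ x) (Ψ y) = dist x y) ?_ ?_ x y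
    · exact isClosed_eq (by have := Ψ.continuous; fun_prop) (by fun_prop)
    · intro a b
      rw [hΨ, hΨ, h]
  exact ⟨⟨Ψ.toEquiv, hiso⟩, hΨ⟩

/-- The coded points. -/
def pt {M X : Type*} (d : M → E) (T : X → E →L[ℝ] E) : M × Option X → E
  | (j, none) => d j
  | (j, some i) => T i (d j)

theorem transfer {L X : Type*} [CompleteSpace E] [CompleteSpace E']
    (d : Option L → E) (d' : Option L → E') (hd : DenseRange d) (hd' : DenseRange d')
    (h0 : d none = 0) (h0' : d' none = 0) (T : X → E →L[ℝ] E) (T' : X → E' →L[ℝ] E')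
    (h : ∀ a b, dist (pt d T a) (pt d T b) = dist (pt d' T' a) (pt d' T' b)) :
    ∃ Θ : Calkin ℝ E →+* Calkin ℝ E', ∀ i, Θ (cmk E (T i)) = cmk E' (T' i) := by
  have hp : DenseRange (pt d T) := hd.mono (by rintro _ ⟨j, rfl⟩; exact ⟨(j, none), rfl⟩)
  have hq : DenseRange (pt d' T') := hd'.mono (by rintro _ ⟨j, rfl⟩; exact ⟨(j, none), rfl⟩)
  obtain ⟨Φ, hΦ⟩ := exists_isometry _ _ hp hq h
  have hd1 : ∀ j, Φ (d j) = d' j := fun j => hΦ (j, none)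
  have hT1 : ∀ i j, Φ (T i (d j)) = T' i (d' j) := fun i j => hΦ (j, some i)
  have hz : Φ 0 = 0 := by rw [← h0, hd1, h0']
  let e : E ≃ₗᵢ[ℝ] E' := Φ.toRealLinearIsometryEquivOfMapZero hz
  have he : ∀ x, e x = Φ x := fun x => rfl
  obtain ⟨Θ, hΘ⟩ := exists_hom e.toContinuousLinearEquiv
  refine ⟨Θ, fun i => ?_⟩
  rw [hΘ]
  congr 1
  apply ContinuousLinearMap.coeFn_injective
  refine hd'.equalizer (ContinuousLinearMap.continuous _) (ContinuousLinearMap.continuous _) ?_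
  funext j
  have h1 : e.symm (d' j) = d j := by
    rw [← hd1, ← he, e.symm_apply_apply]
  change e (T i (e.symm (d' j))) = T' i (d' j)
  rw [h1, he, hT1]

end Spaces

section Codes

/-- `c` is a code for a realization of `AS L S` as a Calkin algebra. -/
def Rep (L : Type v) (S : Set (Set L))
    (c : (Option L × Option (Idx L)) → (Option L × Option (Idx L)) → ℝ) : Prop :=
  ∃ (E : Type v) (_ : NormedAddCommGroup E) (_ : NormedSpace ℝ E) (_ : CompleteSpace E)
    (d : Option L → E) (T : Idx L → E →L[ℝ] E) (φ : AS L S ≃+* Calkin ℝ E),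
    d none = 0 ∧ DenseRange d ∧ (∀ i, φ ⟨ind {i}, ind_mem_AS L S i⟩ = cmk E (T i)) ∧
    ∀ a b, c a b = dist (pt d T a) (pt d T b)

theorem Rep.sub {L : Type v} {S S' : Set (Set L)}
    {c : (Option L × Option (Idx L)) → (Option L × Option (Idx L)) → ℝ}
    (h : Rep L S c) (h' : Rep L S' c) : S' ⊆ S := by
  obtain ⟨E, _, _, _, d, T, φ, h0, hd, hT, hc⟩ := h
  obtain ⟨E', _, _, _, d', T', φ', h0', hd', hT', hc'⟩ := h'
  obtain ⟨Θ, hΘ⟩ := transfer d d' hd hd' h0 h0' T T' (fun a b => by rw [← hc, ← hc'])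
  apply AS_anti
  refine rigid _ _ (ind_mem_AS L S) (ind_mem_AS L S')
    ((φ'.symm : Calkin ℝ E' →+* AS L S').comp (Θ.comp (φ : AS L S →+* Calkin ℝ E))) ?_
  intro i
  change φ'.symm (Θ (φ _)) = _
  rw [hT, hΘ, ← hT', φ'.symm_apply_apply]

theorem exists_rep {L : Type v} {S : Set (Set L)} (E : Type v) [NormedAddCommGroup E]
    [NormedSpace ℝ E] [CompleteSpace E] (D : Set E) (hD : Dense D) (hc : #D ≤ #L)
    (φ : AS L S ≃+* Calkin ℝ E) : ∃ c, Rep L S c := by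
  obtain ⟨g⟩ : Nonempty (D ↪ L) := hc
  have hne : Nonempty D := hD.nonempty.to_subtype
  have hsurj : Function.Surjective (Function.invFun g : L → D) := Function.invFun_surjective g.injective
  let d : Option L → E := fun o => o.elim 0 fun l => ((Function.invFun g l : D) : E)
  have hd : DenseRange d := by
    refine hD.mono ?_
    intro x hx
    obtain ⟨l, hl⟩ := hsurj ⟨x, hx⟩
    exact ⟨some l, by simp [d, hl]⟩
  choose T hT using fun i => cmk_surjective E (φ ⟨ind {i}, ind_mem_AS L S i⟩)
  exact ⟨fun a b => dist (pt d T a) (pt d T b), E, inferInstance, inferInstance, inferInstance,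
    d, T, φ, rfl, hd, fun i => (hT i).symm, fun a b => rfl⟩

theorem mk_fun_le {lam : Cardinal.{v}} (hlam : ℵ₀ ≤ lam) (J : Type v) (hJ : #J ≤ lam) :
    #(J → ℝ) ≤ 2 ^ lam := by
  rw [mk_arrow, mk_real, lift_continuum, lift_uzero, ← two_power_aleph0, ← power_mul]
  refine power_le_power_left two_ne_zero ?_
  calc ℵ₀ * #J ≤ lam * lam := mul_le_mul' hlam hJ
    _ = lam := mul_eq_self hlam

theorem mk_Idx {L : Type v} (hL : ℵ₀ ≤ #L) : #(Idx L) ≤ #L := by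
  have : Infinite L := infinite_iff.2 hL
  simp only [Idx, mk_prod, lift_id, lift_uzero, mk_finset_of_infinite, mk_nat, lift_aleph0]
  rw [mul_eq_self hL, mul_aleph0_eq hL]

end Codes

end CalkinCounting

open CalkinCounting in
theorem statement0 (lam : Cardinal.{u}) (hlam : Cardinal.aleph0 ≤ lam) :
    ∃ A : BundledBanachAlgebra.{u},
      (∃ D : Set A.carrier, Dense D ∧ #D ≤ 2 ^ lam) ∧
      ∀ (E : Type u) [NormedAddCommGroup E] [NormedSpace ℝ E] [CompleteSpace E],
        (∃ D : Set E, Dense D ∧ #D ≤ lam) →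
        IsEmpty (A.carrier ≃+* Calkin ℝ E) := by
  by_contra hcon
  let L : Type u := lam.out
  have hL : #L = lam := mk_out lam
  have hX : #(Idx L) ≤ lam := hL ▸ mk_Idx (hL.symm ▸ hlam)
  have hrep : ∀ S : Set (Set L), ∃ c, Rep L S c := by
    intro S
    by_contra hS
    apply hcon
    have : CompleteSpace (AS L S) := (isClosed_alg _ _ _).completeSpace_coe
    refine ⟨⟨AS L S⟩, ⟨Set.univ, dense_univ, ?_⟩, ?_⟩
    · rw [mk_univ]
      refine le_trans ?_ (mk_fun_le hlam (Idx L) hX)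
      exact mk_le_of_injective (f := fun f : AS L S => ((f : BoundedContinuousFunction (Idx L) ℝ) : Idx L → ℝ))
        fun f g h => Subtype.ext (DFunLike.coe_injective h)
    · intro E _ _ _ ⟨D, hD, hDc⟩
      exact ⟨fun φ => hS (exists_rep E D hD (hL.symm ▸ hDc) φ)⟩
  choose c hc using hrep
  have hinj : Function.Injective c := by
    intro S S' h
    have h' : Rep L S' (c S) := h ▸ hc S'
    exact Set.Subset.antisymm (h'.sub (hc S)) ((hc S).sub h')
  have hJ : #(Option L × Option (Idx L)) ≤ lam := by
    rw [mk_prod, lift_id, lift_id, mk_option, mk_option, hL]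
    have h1 : lam + 1 ≤ lam := (add_one_eq hlam).le
    calc (lam + 1) * (#(Idx L) + 1) ≤ lam * lam :=
          mul_le_mul' h1 ((add_le_add_left hX 1).trans h1)
      _ = lam := mul_eq_self hlam
  have h1 : #(Set (Set L)) ≤ 2 ^ lam := by
    refine (mk_le_of_injective (f := fun S => Function.uncurry (c S)) ?_).trans
      (mk_fun_le hlam ((Option L × Option (Idx L)) × (Option L × Option (Idx L))) ?_)
    · intro S S' h
      exact hinj (by simpa using congrArg Function.curry h)
    · rw [← mul_def]
      exact (mul_le_mul' hJ hJ).trans (mul_eq_self hlam).le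
  rw [mk_set, mk_set, hL] at h1
  exact absurd h1 (cantor _).not_ge
end

section
/- For every infinite cardinal λ there exists an ordinal α such that the Banach algebra C([0,α],ℝ) has a dense subset of cardinality at most 2^λ and, for every real Banach space E having a dense subset of cardinality at most λ, C([0,α],ℝ) is not isomorphic as a ring to the Calkin algebra B(E)/K(E). -/
open Cardinal

/-- The ordinal interval `[0, α]`, i.e. the set of ordinals `≤ α`, with its (order) topology,
is a compact space. -/
instance (α : Ordinal.{u}) : CompactSpace (Set.Iic α) := by
  rw [← isCompact_iff_compactSpace, ← Set.Icc_bot]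
  exact isCompact_Icc

/-- Transfinite derived sets of a topological space. -/
def derSet (X : Type*) [TopologicalSpace X] (γ : Ordinal.{v}) : Set X :=
  {x | ∀ δ : Ordinal.{v}, (h : δ < γ) → x ∈ closure (derSet X δ \ {x})}
termination_by γ
decreasing_by exact h

theorem mem_derSet {X : Type*} [TopologicalSpace X] (γ : Ordinal.{v}) (x : X) :
    x ∈ derSet X γ ↔ ∀ δ < γ, x ∈ closure (derSet X δ \ {x}) := by
  rw [derSet]; rfl

theorem derSet_map {X Y : Type*} [TopologicalSpace X] [TopologicalSpace Y] (g : X → Y)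
    (hg : Continuous g) (hi : Function.Injective g) (γ : Ordinal.{v}) :
    ∀ x ∈ derSet X γ, g x ∈ derSet Y γ := by
  induction γ using WellFoundedLT.induction with
  | ind γ ih =>
    intro x hx
    rw [mem_derSet] at hx ⊢
    intro δ hδ
    have h1 := image_closure_subset_closure_image hg (Set.mem_image_of_mem g (hx δ hδ))
    refine closure_mono ?_ h1
    rintro _ ⟨z, ⟨hz, hzx⟩, rfl⟩
    exact ⟨ih δ hδ z hz, fun h => hzx (hi h)⟩

theorem derSet_le (α : Ordinal.{v}) (γ : Ordinal.{v}) :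
    ∀ x ∈ derSet (Set.Iic α) γ, γ ≤ x.1 := by
  induction γ using WellFoundedLT.induction with
  | ind γ ih =>
    intro x hx
    by_contra hlt
    push Not at hlt
    rw [mem_derSet] at hx
    -- x < γ, so x in closure of D x \ {x}; all elements of D x are ≥ x
    have h1 := hx x.1 hlt
    -- pick a point y in D x \ {x} with y ≤ x
    have hopen : IsOpen {y : Set.Iic α | y.1 < Order.succ x.1} :=
      isOpen_Iio.preimage continuous_subtype_val
    rw [mem_closure_iff] at h1
    obtain ⟨y, hy1, hy2, hy3⟩ := h1 _ hopen (Order.lt_succ x.1)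
    have hyx : y.1 ≤ x.1 := Order.lt_succ_iff.1 hy1
    exact hy3 (Subtype.ext (le_antisymm hyx (ih x.1 hlt y hy2)))

theorem omega_mem_derSet (α : Ordinal.{v}) (γ : Ordinal.{v}) :
    ∀ (ζ : Ordinal.{v}) (h : ζ + Ordinal.omega0 ^ γ ≤ α),
      (⟨ζ + Ordinal.omega0 ^ γ, h⟩ : Set.Iic α) ∈ derSet (Set.Iic α) γ := by
  induction γ using WellFoundedLT.induction with
  | ind γ ih =>
    intro ζ h
    rw [mem_derSet]
    intro δ hδ
    have hpos : (0 : Ordinal.{v}) < Ordinal.omega0 ^ γ :=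
      Ordinal.opow_pos _ Ordinal.omega0_pos
    have hpos' : (0 : Ordinal.{v}) < Ordinal.omega0 ^ δ :=
      Ordinal.opow_pos _ Ordinal.omega0_pos
    set x : Set.Iic α := ⟨ζ + Ordinal.omega0 ^ γ, h⟩ with hxdef
    rw [mem_closure_iff_nhds]
    intro U hU
    obtain ⟨V, hV, hVU⟩ := (mem_nhds_subtype _ _ _).1 hU
    obtain ⟨l, hl, hlV⟩ := exists_Ioc_subset_of_mem_nhds hV
      ⟨0, lt_of_lt_of_le hpos (le_add_self)⟩
    have hl' : l < ζ + Ordinal.omega0 ^ γ := hl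
    have hy : ∃ y' < Ordinal.omega0 ^ γ, l ≤ ζ + y' := by
      rcases le_total l ζ with h0 | h0
      · exact ⟨0, hpos, by simpa using h0⟩
      · refine ⟨l - ζ, ?_, (Ordinal.add_sub_cancel_of_le h0).ge⟩
        rw [← Ordinal.add_sub_cancel_of_le h0] at hl'
        exact lt_of_add_lt_add_left hl'
    obtain ⟨y', hy', hly⟩ := hy
    have hlt : y' + Ordinal.omega0 ^ δ < Ordinal.omega0 ^ γ :=
      Ordinal.isPrincipal_add_omega0_opow γ hy'
        ((Ordinal.opow_lt_opow_iff_right Ordinal.one_lt_omega0).2 hδ)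
    have hz : ζ + y' + Ordinal.omega0 ^ δ < ζ + Ordinal.omega0 ^ γ := by
      rw [add_assoc]; exact (add_lt_add_iff_left ζ).2 hlt
    have hlz : l < ζ + y' + Ordinal.omega0 ^ δ :=
      lt_of_le_of_lt hly (lt_add_of_pos_right _ hpos')
    refine ⟨⟨ζ + y' + Ordinal.omega0 ^ δ, hz.le.trans h⟩, hVU (hlV ⟨hlz, hz.le⟩),
      ih δ hδ _ _, ?_⟩
    intro heq
    have := congrArg Subtype.val heq
    exact hz.ne this

/-- A surjective ring homomorphism between algebras of continuous functions comes from a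
continuous injection. -/
theorem exists_inj_of_ringHom {X Y : Type*} [TopologicalSpace X] [CompactSpace X] [T2Space X]
    [TopologicalSpace Y] [CompactSpace Y] [T2Space Y] (φ : C(X, ℝ) →+* C(Y, ℝ))
    (hφ : Function.Surjective φ) : ∃ g : Y → X, Continuous g ∧ Function.Injective g := by
  have hc : ∀ (r : ℝ) (y : Y), φ (algebraMap ℝ C(X, ℝ) r) y = r := by
    intro r y
    have h : (((ContinuousMap.evalAlgHom ℝ ℝ y : C(Y, ℝ) →ₐ[ℝ] ℝ) : C(Y, ℝ) →+* ℝ).comp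
      (φ.comp (algebraMap ℝ C(X, ℝ)))) = RingHom.id ℝ := Subsingleton.elim _ _
    exact congrArg (fun k : ℝ →+* ℝ => k r) h
  let χ : Y → (C(X, ℝ) →ₐ[ℝ] ℝ) := fun y =>
    { (((ContinuousMap.evalAlgHom ℝ ℝ y : C(Y, ℝ) →ₐ[ℝ] ℝ) : C(Y, ℝ) →+* ℝ).comp φ) with
      commutes' := fun r => hc r y }
  have hχ : ∀ y f, χ y f = φ f y := fun y f => rfl
  have key : ∀ y : Y, ∃ x : X, ∀ f : C(X, ℝ), φ f y = f x := by
    intro y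
    obtain ⟨x, hx⟩ := (WeakDual.CharacterSpace.continuousMapEval_bijective (X := X) (𝕜 := ℝ)).2
      (WeakDual.CharacterSpace.equivAlgHom.symm (χ y))
    refine ⟨x, fun f => ?_⟩
    rw [← WeakDual.CharacterSpace.continuousMapEval_apply_apply (𝕜 := ℝ) X x f, hx]
    rfl
  choose g hg using key
  refine ⟨g, ?_, ?_⟩
  · rw [continuous_iff_continuousAt]
    intro y
    rw [ContinuousAt, (nhds_basis_opens (g y)).tendsto_right_iff]
    rintro U ⟨hyU, hU⟩
    obtain ⟨f, hf0, hf1, -⟩ := exists_continuous_zero_one_of_isClosed (X := X)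
      (s := {g y}) (t := Uᶜ) isClosed_singleton hU.isClosed_compl
      (Set.disjoint_singleton_left.2 (fun h => h hyU))
    have h1 : φ f y < 1 := by
      rw [hg, hf0 rfl]; exact zero_lt_one
    filter_upwards [(φ f).continuous.continuousAt.eventually_lt_const h1] with z hz
    by_contra hzU
    rw [hg, hf1 hzU] at hz
    exact lt_irrefl _ hz
  · intro a b hab
    by_contra hne
    obtain ⟨f, hf0, hf1, -⟩ := exists_continuous_zero_one_of_isClosed (X := Y)
      (s := {a}) (t := {b}) isClosed_singleton isClosed_singleton
      (by simpa using hne)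
    obtain ⟨f', rfl⟩ := hφ f
    have h0 := hf0 (Set.mem_singleton a)
    have h1 := hf1 (Set.mem_singleton b)
    rw [hg] at h0 h1
    rw [hab, h1] at h0
    exact one_ne_zero h0

theorem isometryEquiv_of_code {L E F : Type*} [MetricSpace E] [CompleteSpace E]
    [MetricSpace F] [CompleteSpace F] (s : L → E) (t : L → F) (hs : DenseRange s)
    (ht : DenseRange t) (h : ∀ i j, dist (s i) (s j) = dist (t i) (t j)) :
    Nonempty (E ≃ᵢ F) := by
  let _ : PseudoMetricSpace L := PseudoMetricSpace.induced s inferInstance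
  have is : Isometry s := Isometry.of_dist_eq fun i j => rfl
  have it : Isometry t := Isometry.of_dist_eq fun i j => (h i j).symm
  let p : AbstractCompletion L := ⟨E, s, inferInstance, inferInstance, inferInstance,
    is.isUniformInducing, hs⟩
  let q : AbstractCompletion L := ⟨F, t, inferInstance, inferInstance, inferInstance,
    it.isUniformInducing, ht⟩
  let e : E ≃ᵤ F := p.compareEquiv q
  have he : ∀ i, e (s i) = t i := fun i => p.compare_coe q i
  have hc : Continuous e := e.continuous
  refine ⟨IsometryEquiv.mk e.toEquiv (Isometry.of_dist_eq fun x y => ?_)⟩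
  change dist (e x) (e y) = dist x y
  refine hs.induction_on₂ (p := fun x y => dist (e x) (e y) = dist x y) ?_ ?_ x y
  · exact isClosed_eq (by fun_prop) (by fun_prop)
  · intro i j
    rw [he, he, h]

theorem mem_compactIdeal_iff {E : Type*} [NormedAddCommGroup E] [NormedSpace ℝ E]
    (T : E →L[ℝ] E) : T ∈ compactIdeal ℝ E ↔ IsCompactOperator T :=
  TwoSidedIdeal.mem_mk' _ _ _ _ _ _ _

theorem calkin_map {E F : Type*} [NormedAddCommGroup E] [NormedSpace ℝ E]
    [NormedAddCommGroup F] [NormedSpace ℝ F] (e : E ≃L[ℝ] F) :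
    ∃ φ : Calkin ℝ E →+* Calkin ℝ F, Function.Surjective φ := by
  let c : (E →L[ℝ] E) →+* (F →L[ℝ] F) :=
    { toFun := fun T => (e : E →L[ℝ] F) ∘L T ∘L (e.symm : F →L[ℝ] E)
      map_one' := by ext x; simp
      map_mul' := fun S T => by ext x; simp
      map_zero' := by ext x; simp
      map_add' := fun S T => by ext x; simp }
  have hc : Function.Surjective c := fun T =>
    ⟨(e.symm : F →L[ℝ] E) ∘L T ∘L (e : E →L[ℝ] F), by ext x; simp [c]⟩
  let m : (E →L[ℝ] E) →+* (compactIdeal ℝ F).ringCon.Quotient :=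
    ((compactIdeal ℝ F).ringCon.mk').comp c
  have hm : Function.Surjective m := (RingCon.mk'_surjective _).comp hc
  have hk : (compactIdeal ℝ E).ringCon ≤ RingCon.ker m := by
    intro S T hST
    change m S = m T
    refine (RingCon.eq _).2 ?_
    rw [TwoSidedIdeal.rel_iff] at hST ⊢
    rw [← map_sub]
    have hST' : IsCompactOperator (S - T) := (mem_compactIdeal_iff _).1 hST
    refine (mem_compactIdeal_iff _).2 ?_
    exact (hST'.comp_clm (e.symm : F →L[ℝ] E)).clm_comp (e : E →L[ℝ] F)
  exact ⟨RingCon.lift _ m hk, RingCon.lift_surjective_of_surjective hk hm⟩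

/-- `c` codes a Banach space whose Calkin algebra is `C([0,α])`. -/
def Codes (L : Type u) (c : L × L → ℝ) (α : Ordinal.{u}) : Prop :=
  ∃ (E : Type u) (_ : NormedAddCommGroup E) (_ : NormedSpace ℝ E) (_ : CompleteSpace E)
    (s : L → E), DenseRange s ∧ (∀ p, c p = dist (s p.1) (s p.2)) ∧
    Nonempty (C(Set.Iic α, ℝ) ≃+* Calkin ℝ E)

theorem codes_contra (L : Type u) (c : L × L → ℝ) (α β : Ordinal.{u}) (hα : Codes L c α)
    (hβ : Codes L c β) (h : Ordinal.omega0 ^ (Order.succ α) ≤ β) : False := by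
  obtain ⟨E, _, _, _, s, hs, hcs, ⟨φ⟩⟩ := hα
  obtain ⟨F, _, _, _, t, ht, hct, ⟨ψ⟩⟩ := hβ
  obtain ⟨i⟩ := isometryEquiv_of_code s t hs ht
    (fun i j => (hcs (i, j)).symm.trans (hct (i, j)))
  obtain ⟨χ, hχ⟩ := calkin_map i.toRealLinearIsometryEquiv.toContinuousLinearEquiv
  obtain ⟨g, hg, hgi⟩ := exists_inj_of_ringHom
    (((ψ.symm : Calkin ℝ F →+* C(Set.Iic β, ℝ)).comp χ).comp
      (φ : C(Set.Iic α, ℝ) →+* Calkin ℝ E))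
    ((ψ.symm.surjective.comp hχ).comp φ.surjective)
  have h0 := omega_mem_derSet β (Order.succ α) 0 (by simpa using h)
  have h1 := derSet_map g hg hgi _ _ h0
  have h2 := derSet_le _ _ _ h1
  exact absurd (h2.trans (g _).2) (not_le_of_gt (Order.lt_succ α))

theorem dense_bound (κ : Cardinal.{u}) (hκ : 𝔠 ≤ κ) (α : Ordinal.{u}) (hα : α.card ≤ κ) :
    ∃ D : Set C(Set.Iic α, ℝ), Dense D ∧ #D ≤ Cardinal.lift.{u + 1} κ := by
  have hcl : ∀ a : Set.Iic α, IsClopen (Set.Iic a) := by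
    intro a
    refine ⟨isClosed_Iic, ?_⟩
    have : (Set.Iic a : Set (Set.Iic α)) = {y : Set.Iic α | y.1 < Order.succ a.1} := by
      ext y; simp
    rw [this]
    exact isOpen_Iio.preimage continuous_subtype_val
  let f : Set.Iic α → C(Set.Iic α, ℝ) := fun a =>
    ⟨(Set.Iic a).indicator 1, continuous_one.indicator (by simp [(hcl a).frontier_eq])⟩
  let A := Algebra.adjoin ℝ (Set.range f)
  have hsep : A.SeparatesPoints := by
    have main : ∀ x y : Set.Iic α, x < y → f x x ≠ f x y := by
      intro x y hxy
      simp [f, Set.indicator, hxy]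
    intro x y hne
    rcases lt_or_gt_of_ne hne with h | h
    · exact ⟨_, ⟨f x, Algebra.subset_adjoin ⟨x, rfl⟩, rfl⟩, main x y h⟩
    · exact ⟨_, ⟨f y, Algebra.subset_adjoin ⟨y, rfl⟩, rfl⟩, (main y x h).symm⟩
  have htop := ContinuousMap.subalgebra_topologicalClosure_eq_top_of_separatesPoints A hsep
  refine ⟨(A : Set C(Set.Iic α, ℝ)), ?_, ?_⟩
  · intro x
    have : x ∈ A.topologicalClosure := by rw [htop]; trivial
    exact this
  · have h1 := Algebra.lift_cardinalMk_adjoin_le ℝ (Set.range f)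
    have hinf : ℵ₀ ≤ κ := aleph0_le_continuum.trans hκ
    have h2 : #(Set.range f) ≤ Cardinal.lift.{u + 1} κ := by
      refine mk_range_le.trans ?_
      rw [← Order.Iio_succ, Cardinal.mk_Iio_ordinal, lift_le]
      rw [Order.succ_eq_add_one, Ordinal.card_add_one]
      exact Cardinal.add_le_of_le hinf hα (one_le_aleph0.trans hinf)
    rw [Cardinal.lift_id'.{0, u + 1}, Cardinal.lift_id'.{0, u + 1}] at h1
    refine h1.trans (sup_le (sup_le ?_ h2) ?_)
    · rw [Cardinal.mk_real, Cardinal.lift_continuum, ← Cardinal.lift_continuum.{u + 1, u}]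
      exact Cardinal.lift_le.2 hκ
    · rw [← Cardinal.lift_aleph0.{u + 1, u}]
      exact Cardinal.lift_le.2 hinf

/-- For every infinite cardinal `λ` there exists an ordinal `α` such that the Banach algebra
`C([0,α], ℝ)` has a dense subset of cardinality at most `2 ^ λ` and, for every real Banach
space `E` having a dense subset of cardinality at most `λ`, `C([0,α], ℝ)` is not isomorphic
as a ring to the Calkin algebra `B(E)/K(E)`. -/
theorem statement1 (lam : Cardinal.{u}) (hlam : Cardinal.aleph0 ≤ lam) :
    ∃ α : Ordinal.{u},
      (∃ D : Set C(Set.Iic α, ℝ), Dense D ∧ #D ≤ Cardinal.lift.{u + 1} (2 ^ lam)) ∧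
      ∀ (E : Type u) [NormedAddCommGroup E] [NormedSpace ℝ E] [CompleteSpace E],
        (∃ D : Set E, Dense D ∧ #D ≤ lam) →
        IsEmpty (C(Set.Iic α, ℝ) ≃+* Calkin ℝ E) := by
  classical
  set κ : Cardinal.{u} := 2 ^ lam with hκ
  have hcκ : 𝔠 ≤ κ := by
    rw [← two_power_aleph0]; exact power_le_power_left two_ne_zero hlam
  have hinf : ℵ₀ ≤ κ := aleph0_le_continuum.trans hcκ
  have hreg : (Order.succ κ).IsRegular := isRegular_succ hinf
  have hinf' : ℵ₀ ≤ Order.succ κ := hinf.trans (Order.le_succ κ)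
  let L : Type u := lam.out
  have hcard : #(L × L → ℝ) = κ := by
    have h1 : #(L × L → ℝ) = 𝔠 ^ lam := by
      simp [L, mul_eq_self hlam, Cardinal.mk_real]
    rw [h1, ← two_power_aleph0, ← power_mul, aleph0_mul_eq hlam]
  let Q : (L × L → ℝ) → Ordinal.{u} → Prop := fun c α => Codes L c α ∧ α < (Order.succ κ).ord
  let a : (L × L → ℝ) → Ordinal.{u} := fun c => if h : ∃ α, Q c α then h.choose else 0
  have ha : ∀ c, a c < (Order.succ κ).ord := by
    intro c
    by_cases h : ∃ α, Q c α
    · simp only [a, dif_pos h]; exact h.choose_spec.2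
    · simp only [a, dif_neg h]; exact hreg.ord_pos
  have hlim : Order.IsSuccLimit (Order.succ κ).ord := isSuccLimit_ord hinf'
  let b : (L × L → ℝ) → Ordinal.{u} := fun c => Ordinal.omega0 ^ (Order.succ (a c))
  have hb : ∀ c, b c < (Order.succ κ).ord := by
    intro c
    have h1 : (Order.succ (a c)).card ≤ κ :=
      Order.lt_succ_iff.1 (lt_ord.1 (hlim.succ_lt (ha c)))
    refine lt_ord.2 (Order.lt_succ_iff.2 ((Ordinal.card_opow_le _ _).trans ?_))
    simp only [Ordinal.card_omega0]
    exact max_le hinf (max_le hinf h1)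
  have hα : (⨆ c, b c) < (Order.succ κ).ord :=
    Ordinal.iSup_lt_of_lt_cof (by rw [hcard, hreg.cof_ord]; exact Order.lt_succ κ) hb
  refine ⟨⨆ c, b c, dense_bound κ hcκ _ (Order.lt_succ_iff.1 (lt_ord.1 hα)), ?_⟩
  intro E _ _ _ hD
  obtain ⟨D, hD, hDl⟩ := hD
  refine ⟨fun φ => ?_⟩
  have hne : Nonempty D := hD.nonempty.to_subtype
  have hle : #D ≤ #L := by simpa [L] using hDl
  obtain ⟨j⟩ := hle
  let s : L → E := fun l => (Function.invFun j l : D)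
  have hs : DenseRange s := by
    have : Set.range s = D := by
      ext x
      constructor
      · rintro ⟨l, rfl⟩; exact (Function.invFun j l).2
      · intro hx
        exact ⟨j ⟨x, hx⟩, by simp [s, Function.leftInverse_invFun j.injective _]⟩
    rw [DenseRange, this]; exact hD
  let c : L × L → ℝ := fun p => dist (s p.1) (s p.2)
  have hc : Codes L c (⨆ c, b c) := ⟨E, _, _, inferInstance, s, hs, fun p => rfl, ⟨φ⟩⟩
  have hex : ∃ α, Q c α := ⟨_, hc, hα⟩
  have hac : Codes L c (a c) := by
    simp only [a, dif_pos hex]; exact hex.choose_spec.1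
  exact codes_contra L c _ _ hac hc (Ordinal.le_iSup b c)
end

section
/- For every infinite cardinal λ there exists a compact Hausdorff topological space X that is scattered (every nonempty subset of X has a point which is isolated in the subspace topology) and Fréchet–Urysohn, such that the Banach algebra C(X,ℝ) has a dense subset of cardinality at most 2^λ and, for every real Banach space E having a dense subset of cardinality at most λ, C(X,ℝ) is not isomorphic as a ring to the Calkin algebra B(E)/K(E). -/
open Cardinal

/-- A topological space is scattered if every nonempty subset has a point which is isolated
in the subspace topology. -/
def IsScatteredSpace (X : Type*) [TopologicalSpace X] : Prop :=
  ∀ S : Set X, S.Nonempty → ∃ x ∈ S, ∃ U : Set X, IsOpen U ∧ U ∩ S = {x}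

theorem aux_exists_isometryEquiv {ι E F : Type*} [MetricSpace E] [MetricSpace F]
    [CompleteSpace E] [CompleteSpace F] (f : ι → E) (g : ι → F) (hf : DenseRange f)
    (hg : DenseRange g) (h : ∀ i j, dist (f i) (f j) = dist (g i) (g j)) :
    Nonempty (E ≃ᵢ F) := by
  letI : PseudoMetricSpace ι := PseudoMetricSpace.induced f inferInstance
  have key : ∀ {G : Type _} [MetricSpace G] [CompleteSpace G] (k : ι → G), DenseRange k →
      Isometry k → Nonempty (UniformSpace.Completion ι ≃ᵢ G) := by
    intro G _ _ k hk hi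
    have h1 : Isometry (UniformSpace.Completion.extension k) := hi.completion_extension
    have h2 : Set.range k ⊆ Set.range (UniformSpace.Completion.extension k) := by
      rintro _ ⟨i, rfl⟩
      exact ⟨i, UniformSpace.Completion.extension_coe hi.uniformContinuous i⟩
    have h3 : Function.Surjective (UniformSpace.Completion.extension k) := by
      have hc := h1.isClosedEmbedding.isClosed_range
      rw [← Set.range_eq_univ, ← hc.closure_eq]
      exact (hk.mono h2).closure_eq
    exact ⟨IsometryEquiv.mk (Equiv.ofBijective _ ⟨h1.injective, h3⟩) h1⟩
  have key2 : ∀ {G : Type _} [MetricSpace G] [CompleteSpace G] (k : ι → G), DenseRange k →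
      Isometry k → Nonempty (UniformSpace.Completion ι ≃ᵢ G) := by
    intro G _ _ k hk hi
    have h1 : Isometry (UniformSpace.Completion.extension k) := hi.completion_extension
    have h2 : Set.range k ⊆ Set.range (UniformSpace.Completion.extension k) := by
      rintro _ ⟨i, rfl⟩
      exact ⟨i, UniformSpace.Completion.extension_coe hi.uniformContinuous i⟩
    have h3 : Function.Surjective (UniformSpace.Completion.extension k) := by
      have hc := h1.isClosedEmbedding.isClosed_range
      rw [← Set.range_eq_univ, ← hc.closure_eq]
      exact (hk.mono h2).closure_eq
    exact ⟨IsometryEquiv.mk (Equiv.ofBijective _ ⟨h1.injective, h3⟩) h1⟩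
  obtain ⟨a⟩ := key f hf (Isometry.of_dist_eq fun i j => rfl)
  obtain ⟨b⟩ := key2 g hg (Isometry.of_dist_eq fun i j => (h i j).symm)
  exact ⟨a.symm.trans b⟩

theorem aux_mem_compactIdeal {E : Type*} [NormedAddCommGroup E] [NormedSpace ℝ E]
    (f : E →L[ℝ] E) : f ∈ compactIdeal ℝ E ↔ IsCompactOperator f := by
  unfold compactIdeal
  exact TwoSidedIdeal.mem_mk' _ _ _ _ _ _ _

theorem aux_calkin_congr {E F : Type*} [NormedAddCommGroup E] [NormedSpace ℝ E]
    [NormedAddCommGroup F] [NormedSpace ℝ F] (e : E ≃ₗᵢ[ℝ] F) :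
    Nonempty (Calkin ℝ E ≃+* Calkin ℝ F) := by
  let e' : E ≃L[ℝ] F := e.toContinuousLinearEquiv
  let c : (E →L[ℝ] E) ≃+* (F →L[ℝ] F) := e'.conjContinuousAlgEquiv.toAlgEquiv.toRingEquiv
  have hc : ∀ f : E →L[ℝ] E, c f = (e' : E →L[ℝ] F) ∘L f ∘L (e'.symm : F →L[ℝ] E) := by
    intro f; rfl
  refine ⟨RingCon.congr c ?_⟩
  ext x y
  rw [TwoSidedIdeal.rel_iff, aux_mem_compactIdeal, RingCon.comap_rel, TwoSidedIdeal.rel_iff,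
    aux_mem_compactIdeal, ← map_sub, hc]
  generalize x - y = f
  constructor
  · intro h
    exact (h.comp_clm (e'.symm : F →L[ℝ] E)).clm_comp (e' : E →L[ℝ] F)
  · intro h
    have := (h.comp_clm (e' : E →L[ℝ] F)).clm_comp (e'.symm : F →L[ℝ] E)
    have hfe : ((e'.symm : F →L[ℝ] E) ∘ ((e' : E →L[ℝ] F) ∘L f ∘L (e'.symm : F →L[ℝ] E)) ∘
        (e' : E →L[ℝ] F) : E → E) = f := by
      funext v
      simp
    exact hfe ▸ this

/-- Gelfand–Kolmogorov, in the form needed. -/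
theorem aux_gelfand {X Y : Type*} [TopologicalSpace X] [CompactSpace X] [T2Space X]
    [TopologicalSpace Y] [CompactSpace Y] [T2Space Y] (φ : C(X, ℝ) ≃+* C(Y, ℝ)) :
    ∃ h : X → Y, Continuous h ∧ Function.Injective h := by
  have hlin : ∀ (r : ℝ) , φ.symm (algebraMap ℝ C(Y, ℝ) r) = algebraMap ℝ C(X, ℝ) r := by
    intro r
    ext x
    have : ((Pi.evalRingHom (fun _ : X => ℝ) x).comp ContinuousMap.coeFnRingHom).comp
        ((φ.symm : C(Y, ℝ) →+* C(X, ℝ)).comp (algebraMap ℝ C(Y, ℝ))) = RingHom.id ℝ :=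
      Subsingleton.elim _ _
    exact DFunLike.congr_fun this r
  let ψ : C(Y, ℝ) →ₐ[ℝ] C(X, ℝ) := { (φ.symm : C(Y, ℝ) →+* C(X, ℝ)) with commutes' := hlin }
  have hψ : ∀ f, ψ f = φ.symm f := fun f => rfl
  have hex : ∀ x : X, ∃ y : Y, ∀ f : C(Y, ℝ), f y = φ.symm f x := by
    intro x
    let χ : C(Y, ℝ) →ₐ[ℝ] ℝ := (ContinuousMap.evalAlgHom ℝ ℝ x).comp ψ
    obtain ⟨y, hy⟩ := (WeakDual.CharacterSpace.continuousMapEval_bijective Y ℝ).2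
      (WeakDual.CharacterSpace.equivAlgHom.symm χ)
    refine ⟨y, fun f => ?_⟩
    exact DFunLike.congr_fun hy f
  choose h hh using hex
  refine ⟨h, ?_, ?_⟩
  · rw [continuous_iff_continuousAt]
    intro x
    rw [ContinuousAt, Filter.tendsto_def]
    intro s hs
    obtain ⟨U, hUs, hU, hxU⟩ := mem_nhds_iff.1 hs
    obtain ⟨f, f0, f1, -⟩ := exists_continuous_zero_one_of_isClosed
      (isClosed_singleton : IsClosed {h x}) hU.isClosed_compl
      (by rw [Set.disjoint_compl_right_iff_subset]; simpa using hxU)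
    have hx0 : φ.symm f x = 0 := by rw [← hh]; exact f0 rfl
    have : ∀ᶠ z in nhds x, φ.symm f z < 1 :=
      (φ.symm f).continuous.continuousAt.eventually_lt continuousAt_const (by simp [hx0])
    filter_upwards [this] with z hz
    apply hUs
    by_contra hzU
    have := f1 hzU
    rw [hh] at this
    simp at this
    linarith
  · intro x x' hxx
    by_contra hne
    obtain ⟨f, f0, f1, -⟩ := exists_continuous_zero_one_of_isClosed
      (isClosed_singleton : IsClosed {x}) (isClosed_singleton : IsClosed {x'})
      (by simpa using hne)
    have h1 := hh x (φ f)
    have h2 := hh x' (φ f)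
    rw [hxx, h2] at h1
    simp at h1
    have a := f0 (Set.mem_singleton x)
    have b := f1 (Set.mem_singleton x')
    simp at a b
    linarith

theorem aux_density {X : Type u} [TopologicalSpace X] [CompactSpace X] [T2Space X]
    (lam : Cardinal.{u}) (hlam : Cardinal.aleph0 ≤ lam) (hX : #X ≤ 2 ^ lam) :
    ∃ D : Set C(X, ℝ), Dense D ∧ #D ≤ 2 ^ lam := by
  have hsep : ∀ p : X × X, ∃ f : C(X, ℝ), p.1 ≠ p.2 → f p.1 ≠ f p.2 := by
    intro p
    by_cases hp : p.1 = p.2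
    · exact ⟨0, fun h => (h hp).elim⟩
    · obtain ⟨f, f0, f1, -⟩ := exists_continuous_zero_one_of_isClosed
        (isClosed_singleton : IsClosed {p.1}) (isClosed_singleton : IsClosed {p.2})
        (by simpa using hp)
      refine ⟨f, fun _ h => ?_⟩
      have a := f0 (Set.mem_singleton p.1)
      have b := f1 (Set.mem_singleton p.2)
      simp at a b
      linarith
  choose F hF using hsep
  have hinf : Cardinal.aleph0 ≤ 2 ^ lam := hlam.trans (Cardinal.cantor lam).le
  refine ⟨(Algebra.adjoin ℝ (Set.range F) : Subalgebra ℝ C(X, ℝ)), ?_, ?_⟩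
  · have := ContinuousMap.subalgebra_topologicalClosure_eq_top_of_separatesPoints
      (Algebra.adjoin ℝ (Set.range F)) (by
        intro x y hxy
        exact ⟨F (x, y), ⟨F (x, y), Algebra.subset_adjoin ⟨_, rfl⟩, rfl⟩, hF (x, y) hxy⟩)
    rw [dense_iff_closure_eq]
    have h2 := congrArg (fun S : Subalgebra ℝ C(X, ℝ) => (S : Set C(X, ℝ))) this
    simpa using h2
  · have h1 := Algebra.lift_cardinalMk_adjoin_le ℝ (Set.range F)
    simp only [Cardinal.lift_id'.{0, u}, Cardinal.lift_uzero] at h1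
    refine h1.trans ?_
    refine max_le (max_le ?_ ?_) hinf
    · simp only [Cardinal.mk_real, Cardinal.lift_continuum]
      rw [← Cardinal.two_power_aleph0]
      exact Cardinal.power_le_power_left two_ne_zero hlam
    · refine Cardinal.mk_range_le.trans ?_
      rw [Cardinal.mk_prod]
      simp only [Cardinal.lift_id]
      exact Cardinal.mul_le_of_le hinf hX hX

section Glue

variable {I : Type*} {Y : I → Type*} [∀ i, TopologicalSpace (Y i)] [∀ i, CompactSpace (Y i)]
  [∀ i, T2Space (Y i)]

open OnePoint Topology Filter

theorem aux_wlc : WeaklyLocallyCompactSpace (Σ i, Y i) := by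
  refine ⟨fun x => ⟨Set.range (Sigma.mk x.1), isCompact_range continuous_sigmaMk, ?_⟩⟩
  exact isOpen_range_sigmaMk.mem_nhds ⟨x.2, rfl⟩

theorem aux_t2 : T2Space (OnePoint (Σ i, Y i)) := by
  haveI : WeaklyLocallyCompactSpace (Σ i, Y i) := aux_wlc
  infer_instance

theorem aux_scattered (h : ∀ i, IsScatteredSpace (Y i)) :
    IsScatteredSpace (OnePoint (Σ i, Y i)) := by
  intro S hS
  by_cases hc : ∃ (i : I) (y : Y i), ((⟨i, y⟩ : Σ i, Y i) : OnePoint (Σ i, Y i)) ∈ S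
  · obtain ⟨i, y, hy⟩ := hc
    obtain ⟨x, hx, U, hU, hUS⟩ := h i
      ((fun y : Y i => ((⟨i, y⟩ : Σ i, Y i) : OnePoint (Σ i, Y i))) ⁻¹' S) ⟨y, hy⟩
    refine ⟨_, hx, (fun y : Y i => ((⟨i, y⟩ : Σ i, Y i) : OnePoint (Σ i, Y i))) '' U,
      (isOpenMap_coe.comp isOpenMap_sigmaMk) U hU, ?_⟩
    rw [← Set.image_inter_preimage, hUS, Set.image_singleton]
  · obtain ⟨x, hx⟩ := hS
    have hall : ∀ z ∈ S, z = ∞ := by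
      intro z hz
      induction z using OnePoint.rec with
      | infty => rfl
      | coe z => exact (hc ⟨z.1, z.2, hz⟩).elim
    refine ⟨x, hx, Set.univ, isOpen_univ, ?_⟩
    rw [Set.univ_inter]
    ext z
    constructor
    · intro hz; rw [Set.mem_singleton_iff, hall z hz, hall x hx]
    · rintro rfl; exact hx

theorem aux_tendsto {α : Type*} {l : Filter α} (z : α → Σ i, Y i)
    (hz : Tendsto (fun a => (z a).1) l cofinite) :
    Tendsto (fun a => ((z a : Σ i, Y i) : OnePoint (Σ i, Y i))) l (𝓝 ∞) := by
  refine tendsto_coe_infty.comp ?_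
  rw [(hasBasis_coclosedCompact).tendsto_right_iff]
  rintro K ⟨-, hK⟩
  have hfin : (Sigma.fst '' K).Finite := by
    letI : TopologicalSpace I := ⊥
    haveI : DiscreteTopology I := ⟨rfl⟩
    have hcont : Continuous (Sigma.fst : (Σ i, Y i) → I) :=
      continuous_sigma fun i => continuous_const
    exact (hK.image hcont).finite_of_discrete
  filter_upwards [hz.eventually hfin.compl_mem_cofinite] with a ha hK'
  exact ha ⟨z a, hK', rfl⟩

theorem aux_frechet (h : ∀ i, FrechetUrysohnSpace (Y i)) :
    FrechetUrysohnSpace (OnePoint (Σ i, Y i)) := by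
  refine ⟨fun A x hx => ?_⟩
  induction x using OnePoint.rec with
  | infty =>
    by_cases hA : (∞ : OnePoint (Σ i, Y i)) ∈ A
    · exact subset_seqClosure hA
    have hinf : {i : I | ∃ y : Y i, ((⟨i, y⟩ : Σ i, Y i) : OnePoint (Σ i, Y i)) ∈ A}.Infinite := by
      intro hfin
      set T := {i : I | ∃ y : Y i, ((⟨i, y⟩ : Σ i, Y i) : OnePoint (Σ i, Y i)) ∈ A} with hT
      let K : Set (Σ i, Y i) := ⋃ i ∈ T, Set.range (Sigma.mk i)
      have hK : IsCompact K := hfin.isCompact_biUnion fun i _ => isCompact_range continuous_sigmaMk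
      have hK' : IsClosed K := hK.isClosed
      have hop : IsOpen ((OnePoint.some '' K : Set (OnePoint (Σ i, Y i)))ᶜ) :=
        isOpen_compl_image_coe.2 ⟨hK', hK⟩
      obtain ⟨w, hw, hwA⟩ := mem_closure_iff.1 hx _ hop infty_notMem_image_coe
      induction w using OnePoint.rec with
      | infty => exact hA hwA
      | coe w =>
        refine hw ⟨w, ?_, rfl⟩
        exact Set.mem_biUnion (show w.1 ∈ T from ⟨w.2, hwA⟩) ⟨w.2, rfl⟩
    let e := hinf.natEmbedding
    have hy : ∀ n, ∃ y : Y (e n : I), ((⟨e n, y⟩ : Σ i, Y i) : OnePoint (Σ i, Y i)) ∈ A :=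
      fun n => (e n).2
    choose y hy using hy
    refine ⟨fun n => ((⟨e n, y n⟩ : Σ i, Y i) : OnePoint (Σ i, Y i)), hy, ?_⟩
    refine aux_tendsto (fun n => (⟨e n, y n⟩ : Σ i, Y i)) ?_
    have hinj : Function.Injective (fun n => (e n : I)) :=
      Subtype.val_injective.comp e.injective
    simpa [Nat.cofinite_eq_atTop] using hinj.tendsto_cofinite
  | coe x =>
    obtain ⟨i, y⟩ := x
    let k : Y i → OnePoint (Σ i, Y i) := fun y => ((⟨i, y⟩ : Σ i, Y i) : OnePoint (Σ i, Y i))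
    have hk : Continuous k := continuous_coe.comp continuous_sigmaMk
    have hko : IsOpenMap k := isOpenMap_coe.comp isOpenMap_sigmaMk
    have h1 : y ∈ closure (k ⁻¹' A) := by
      rw [← hko.preimage_closure_eq_closure_preimage hk]
      exact hx
    obtain ⟨s, hs, hs'⟩ := mem_closure_iff_seq_limit.1 h1
    exact ⟨k ∘ s, hs, (hk.tendsto y).comp hs'⟩

/-- A scattered space admits no sequence of continuous injective self maps missing a point `p`
and converging to `p`. -/
theorem aux_not_scattered {X : Type*} [TopologicalSpace X] (hX : IsScatteredSpace X) (p : X)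
    (h : ℕ → X → X) (hc : ∀ n, Continuous (h n)) (hi : ∀ n, Function.Injective (h n))
    (hp : ∀ n x, h n x ≠ p) (ht : Tendsto (fun n => h n p) atTop (𝓝 p)) : False := by
  let W : Set (X → X) := {f | ∀ T : Set (X → X), id ∈ T → (∀ g ∈ T, ∀ n, g ∘ h n ∈ T) → f ∈ T}
  have hWid : id ∈ W := fun T h1 _ => h1
  have hWs : ∀ g ∈ W, ∀ n, g ∘ h n ∈ W := fun g hg n T h1 h2 => h2 g (hg T h1 h2) n
  have hWc : ∀ g ∈ W, Continuous g ∧ Function.Injective g := fun g hg =>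
    hg {g | Continuous g ∧ Function.Injective g} ⟨continuous_id, Function.injective_id⟩
      fun g hg n => ⟨hg.1.comp (hc n), hg.2.comp (hi n)⟩
  obtain ⟨x, ⟨g, hg, rfl⟩, U, hU, hUS⟩ := hX ((fun g => g p) '' W) ⟨_, id, hWid, rfl⟩
  have hgU : g p ∈ U := by
    have : g p ∈ U ∩ ((fun g => g p) '' W) := by rw [hUS]; rfl
    exact this.1
  have hlim : Tendsto (fun n => g (h n p)) atTop (𝓝 (g p)) :=
    ((hWc g hg).1.tendsto p).comp ht
  obtain ⟨n, hn⟩ := (hlim.eventually (hU.mem_nhds hgU)).exists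
  have : g (h n p) ∈ U ∩ ((fun g => g p) '' W) := ⟨hn, g ∘ h n, hWs g hg n, rfl⟩
  rw [hUS] at this
  exact hp n p ((hWc g hg).2 this)

end Glue

/-- For every infinite cardinal `λ` there exists a compact Hausdorff space `X` which is
scattered and Fréchet–Urysohn, such that the Banach algebra `C(X, ℝ)` has a dense subset of
cardinality at most `2 ^ λ` and, for every real Banach space `E` having a dense subset of
cardinality at most `λ`, `C(X, ℝ)` is not isomorphic as a ring to the Calkin algebra
`B(E)/K(E)`. -/
theorem statement2 (lam : Cardinal.{u}) (hlam : Cardinal.aleph0 ≤ lam) :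
    ∃ X : CompHaus.{u},
      IsScatteredSpace X ∧ FrechetUrysohnSpace X ∧
      (∃ D : Set C(X, ℝ), Dense D ∧ #D ≤ 2 ^ lam) ∧
      ∀ (E : Type u) [NormedAddCommGroup E] [NormedSpace ℝ E] [CompleteSpace E],
        (∃ D : Set E, Dense D ∧ #D ≤ lam) →
        IsEmpty (C(X, ℝ) ≃+* Calkin ℝ E) := by
  classical
  let ι : Type u := lam.out
  have hι : #ι = lam := Cardinal.mk_out lam
  let Good : CompHaus.{u} → Prop := fun X =>
    IsScatteredSpace X ∧ FrechetUrysohnSpace X ∧ #X ≤ 2 ^ lam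
  -- `Bad d X`: `C(X)` is the Calkin algebra of a space with distance data `d`
  let Bad : (ι × ι → ℝ) → CompHaus.{u} → Prop := fun d X =>
    ∃ (E : Type u) (_ : NormedAddCommGroup E) (_ : NormedSpace ℝ E) (_ : CompleteSpace E)
      (f : ι → E), DenseRange f ∧ (∀ i j, dist (f i) (f j) = d (i, j)) ∧
      Nonempty (C(X, ℝ) ≃+* Calkin ℝ E)
  have hpow : Cardinal.aleph0 ≤ 2 ^ lam := hlam.trans (Cardinal.cantor lam).le
  have hpt : Good (CompHaus.of PUnit.{u + 1}) := by
    refine ⟨?_, ?_, ?_⟩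
    · rintro S ⟨x, hx⟩
      refine ⟨x, hx, Set.univ, isOpen_univ, ?_⟩
      ext z
      constructor
      · intro _; exact Subsingleton.elim (α := PUnit) _ _
      · rintro rfl; exact ⟨trivial, hx⟩
    · change FrechetUrysohnSpace PUnit.{u + 1}
      infer_instance
    · change #PUnit.{u + 1} ≤ _
      rw [Cardinal.mk_punit]
      exact Cardinal.one_le_aleph0.trans hpow
  have hch : ∀ d : ι × ι → ℝ, ∃ Y : CompHaus.{u}, Good Y ∧
      ((∃ Z, Good Z ∧ Bad d Z) → Bad d Y) := by
    intro d
    by_cases hd : ∃ Z, Good Z ∧ Bad d Z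
    · obtain ⟨Z, hZ, hZ'⟩ := hd
      exact ⟨Z, hZ, fun _ => hZ'⟩
    · exact ⟨_, hpt, fun h => (hd h).elim⟩
  choose Y hYG hYB using hch
  let J : Type u := (ι × ι → ℝ) × ℕ
  let YY : J → Type u := fun j => Y j.1
  have hJ : #J ≤ 2 ^ lam := by
    have h1 : #(ι × ι → ℝ) = 2 ^ lam := by
      rw [Cardinal.mk_arrow]
      simp only [Cardinal.mk_prod, Cardinal.lift_id, Cardinal.mk_real, Cardinal.lift_uzero,
        Cardinal.lift_continuum, hι]
      rw [Cardinal.mul_eq_self hlam, ← Cardinal.two_power_aleph0, ← Cardinal.power_mul,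
        Cardinal.aleph0_mul_eq hlam]
    change #((ι × ι → ℝ) × ℕ) ≤ _
    rw [Cardinal.mk_prod, h1]
    simp only [Cardinal.lift_uzero, Cardinal.mk_nat, Cardinal.lift_aleph0]
    exact Cardinal.mul_le_of_le hpow le_rfl hpow
  haveI : T2Space (OnePoint (Σ j, YY j)) := aux_t2
  let X : CompHaus.{u} := CompHaus.of (OnePoint (Σ j, YY j))
  have hXs : IsScatteredSpace X := aux_scattered (Y := YY) fun j => (hYG j.1).1
  have hXf : FrechetUrysohnSpace X := aux_frechet (Y := YY) fun j => (hYG j.1).2.1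
  have hXc : #X ≤ 2 ^ lam := by
    change #(Option (Σ j, YY j)) ≤ _
    rw [Cardinal.mk_option, Cardinal.mk_sigma]
    refine Cardinal.add_le_of_le hpow ?_ (Cardinal.one_le_aleph0.trans hpow)
    refine (Cardinal.sum_le_sum _ (fun _ : J => 2 ^ lam) fun j : J => (hYG j.1).2.2).trans ?_
    rw [Cardinal.sum_const']
    exact Cardinal.mul_le_of_le hpow hJ le_rfl
  refine ⟨X, hXs, hXf, aux_density lam hlam hXc, ?_⟩
  intro E _ _ _ ⟨D, hD, hDc⟩
  refine ⟨fun φ => ?_⟩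
  -- a dense family indexed by `ι`
  obtain ⟨f, hf⟩ : ∃ f : ι → E, DenseRange f := by
    haveI : Nonempty D := hD.nonempty.to_subtype
    rw [← hι] at hDc
    obtain ⟨k⟩ := hDc
    refine ⟨fun i => ((Function.invFun k i : D) : E), hD.mono ?_⟩
    intro v hv
    exact ⟨k ⟨v, hv⟩, congrArg Subtype.val (Function.leftInverse_invFun k.injective ⟨v, hv⟩)⟩
  let d : ι × ι → ℝ := fun p => dist (f p.1) (f p.2)
  obtain ⟨E', _, _, _, f', hf', hd', ⟨φ'⟩⟩ := hYB d
    ⟨X, ⟨hXs, hXf, hXc⟩, E, inferInstance, inferInstance, inferInstance, f, hf,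
      fun i j => rfl, ⟨φ⟩⟩
  obtain ⟨e⟩ := aux_exists_isometryEquiv f f' hf hf' fun i j => (hd' i j).symm
  obtain ⟨c⟩ := aux_calkin_congr e.toRealLinearIsometryEquiv
  obtain ⟨h, hh, hinj⟩ := aux_gelfand ((φ.trans c).trans φ'.symm)
  let k : ℕ → X → OnePoint (Σ j, YY j) := fun n x =>
    (((⟨(d, n), h x⟩ : Σ j, YY j)) : OnePoint (Σ j, YY j))
  refine aux_not_scattered (X := OnePoint (Σ j, YY j)) hXs OnePoint.infty k ?_ ?_ ?_ ?_
  · intro n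
    exact OnePoint.continuous_coe.comp ((continuous_sigmaMk (σ := YY) (i := (d, n))).comp hh)
  · intro n x y hxy
    have h1 := OnePoint.coe_injective hxy
    exact hinj (sigma_mk_injective (β := YY) h1)
  · intro n x
    exact OnePoint.coe_ne_infty _
  · refine aux_tendsto (fun n => (⟨(d, n), h OnePoint.infty⟩ : Σ j, YY j)) ?_
    have hin : Function.Injective (fun n : ℕ => ((d, n) : J)) := fun a b hab =>
      congrArg Prod.snd hab
    simpa [Nat.cofinite_eq_atTop] using hin.tendsto_cofinite
end

section
/- There exists an infinite compact Hausdorff topological space X that is separable, extremally disconnected, and rigid (the identity is the only homeomorphism of X onto itself), such that for every separable real Banach space E, the Banach algebra C(X,ℝ) is not isomorphic as a ring to the Calkin algebra B(E)/K(E). -/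
open Cardinal TopologicalSpace

namespace Kunen

abbrev Cantor := ℕ → Bool

def res (α : Cantor) (k : ℕ) : Fin k → Bool := fun i => α i

abbrev S := Σ k : ℕ, ((Fin k → Bool) → Finset (Fin k → Bool))

instance : Countable S := inferInstance

def A (α ξ : Cantor) (n : ℕ) : Set S :=
  {x | (x.2 (res α x.1)).card ≤ n ∧ res ξ x.1 ∈ x.2 (res α x.1)}

lemma A_mono (α ξ : Cantor) {m n : ℕ} (h : m ≤ n) : A α ξ m ⊆ A α ξ n :=
  fun _ hx => ⟨hx.1.trans h, hx.2⟩

lemma res_inj (a : Finset Cantor) : ∃ k0, ∀ k ≥ k0, Set.InjOn (fun α => res α k) (a : Set Cantor) := by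
  classical
  have h : ∀ p : Cantor × Cantor, ∃ k0, ∀ k ≥ k0, res p.1 k = res p.2 k → p.1 = p.2 := by
    intro p
    by_cases hp : p.1 = p.2
    · exact ⟨0, fun _ _ _ => hp⟩
    · obtain ⟨i, hi⟩ := Function.ne_iff.1 hp
      refine ⟨i + 1, fun k hk he => absurd (congrFun he ⟨i, hk⟩) hi⟩
  choose f hf using h
  refine ⟨(a ×ˢ a).sup f, fun k hk x hx y hy he => ?_⟩
  refine hf (x, y) k (le_trans ?_ hk) he
  exact Finset.le_sup (f := f) (Finset.mk_mem_product hx hy)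

lemma finite_lt (k0 : ℕ) : {x : S | x.1 < k0}.Finite := by
  have : {x : S | x.1 < k0} = ⋃ k ∈ Set.Iio k0, Set.range (fun f => (⟨k, f⟩ : S)) := by
    ext ⟨k, f⟩
    simp only [Set.mem_ofPred_eq, Set.mem_Iio, Set.mem_iUnion, Set.mem_range, exists_prop]
    constructor
    · intro h; exact ⟨k, h, f, rfl⟩
    · rintro ⟨k', h, f', he⟩
      rw [Sigma.mk.injEq] at he
      rw [← he.1]; exact h
  rw [this]
  exact (Set.finite_Iio k0).biUnion fun k _ => Set.finite_range _

lemma A_linked (α : Cantor) (n : ℕ) (σ : Finset Cantor) (hσ : n < σ.card) :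
    (⋂ ξ ∈ σ, A α ξ n).Finite := by
  classical
  obtain ⟨k0, hk0⟩ := res_inj σ
  refine (finite_lt k0).subset fun x hx => ?_
  by_contra hlt
  simp only [Set.mem_ofPred_eq, not_lt] at hlt
  simp only [Set.mem_iInter] at hx
  have hne : σ.Nonempty := Finset.card_pos.1 (by omega)
  obtain ⟨ξ0, h0⟩ := hne
  have h1 := (hx ξ0 h0).1
  have h2 : σ.image (fun ξ => res ξ x.1) ⊆ x.2 (res α x.1) := by
    intro y hy
    obtain ⟨ξ, hξ, rfl⟩ := Finset.mem_image.1 hy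
    exact (hx ξ hξ).2
  have h3 := Finset.card_le_card h2
  rw [Finset.card_image_of_injOn (hk0 _ hlt)] at h3
  omega

/-- the matrix rows outside `J` are independent modulo `F`. -/
def Ind (F : Filter S) (J : Set Cantor) : Prop :=
  F ≤ Filter.cofinite ∧ ∀ X ∈ F, ∀ a : Finset Cantor, (∀ α ∈ a, α ∉ J) → ∀ (n : Cantor → ℕ)
    (σ : Cantor → Finset Cantor), (∀ α ∈ a, (σ α).card ≤ n α) →
    (X ∩ ⋂ α ∈ a, ⋂ ξ ∈ σ α, A α ξ (n α)).Nonempty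

lemma ind_base : Ind Filter.cofinite ∅ := by
  classical
  refine ⟨le_rfl, fun X hX a _ n σ hσ => ?_⟩
  obtain ⟨k0, hk0⟩ := res_inj a
  have hX' : Xᶜ.Finite := hX
  obtain ⟨k1, hk1⟩ := (hX'.image (fun x : S => x.1)).bddAbove
  set k := max k0 (k1 + 1) with hk
  let f : (Fin k → Bool) → Finset (Fin k → Bool) := fun β =>
    if h : ∃ α ∈ a, res α k = β then (σ h.choose).image (fun ξ => res ξ k) else ∅
  have hf : ∀ α ∈ a, f (res α k) = (σ α).image (fun ξ => res ξ k) := by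
    intro α hα
    have h : ∃ α' ∈ a, res α' k = res α k := ⟨α, hα, rfl⟩
    have h' : h.choose = α :=
      hk0 k (le_max_left _ _) h.choose_spec.1 hα h.choose_spec.2
    simp only [f]
    rw [dif_pos h, h']
  refine ⟨⟨k, f⟩, ?_, ?_⟩
  · by_contra hx
    have := hk1 ⟨⟨k, f⟩, hx, rfl⟩
    simp only at this
    have := le_max_right k0 (k1 + 1)
    omega
  · simp only [Set.mem_iInter]
    intro α hα ξ hξ
    refine ⟨?_, ?_⟩
    · simp only [hf α hα]
      exact Finset.card_image_le.trans (hσ α hα)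
    · simp only [hf α hα]
      exact Finset.mem_image_of_mem _ hξ

lemma Ind.mono {F : Filter S} {J J' : Set Cantor} (h : Ind F J) (hJ : J ⊆ J') : Ind F J' :=
  ⟨h.1, fun X hX a ha => h.2 X hX a fun α hα h' => ha α hα (hJ h')⟩

/-- adding a combination -/
lemma Ind.add {F : Filter S} {J : Set Cantor} (h : Ind F J) (a : Finset Cantor)
    (ha : ∀ α ∈ a, α ∉ J) (n : Cantor → ℕ)
    (σ : Cantor → Finset Cantor) (hσ : ∀ α ∈ a, (σ α).card ≤ n α) :
    Ind (F ⊓ Filter.principal (⋂ α ∈ a, ⋂ ξ ∈ σ α, A α ξ (n α))) (J ∪ a) := by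
  classical
  refine ⟨inf_le_left.trans h.1, fun X hX b hb n' σ' hσ' => ?_⟩
  rw [Filter.mem_inf_principal] at hX
  have := h.2 _ hX (a ∪ b) (by
    intro α hα
    rcases Finset.mem_union.1 hα with hα | hα
    · exact ha α hα
    · exact fun h' => hb α hα (Or.inl h')) (fun α => if α ∈ a then n α else n' α)
    (fun α => if α ∈ a then σ α else σ' α) (by
      intro α hα
      by_cases h1 : α ∈ a
      · simpa [h1] using hσ α h1
      · have : α ∈ b := by simpa [h1] using hα
        simpa [h1] using hσ' α this)
  obtain ⟨x, hx1, hx2⟩ := this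
  simp only [Set.mem_iInter] at hx2
  have hxa : x ∈ ⋂ α ∈ a, ⋂ ξ ∈ σ α, A α ξ (n α) := by
    simp only [Set.mem_iInter]
    intro α hα ξ hξ
    have := hx2 α (Finset.mem_union_left _ hα) ξ (by simpa [hα] using hξ)
    simpa [hα] using this
  refine ⟨x, hx1 hxa, ?_⟩
  simp only [Set.mem_iInter]
  intro α hα ξ hξ
  have h1 : α ∉ a := fun h' => hb α hα (Or.inr h')
  have := hx2 α (Finset.mem_union_right _ hα) ξ (by simpa [h1] using hξ)
  simpa [h1] using this

/-- the sequence `C` is handled by `F` -/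
def Handled (F : Filter S) (C : ℕ → Set S) : Prop :=
  (∃ n, (C n)ᶜ ∈ F) ∨ ∃ D : Cantor → Set S, (∀ ξ, D ξ ∈ F) ∧
    ∀ (n : ℕ) (σ : Finset Cantor), n < σ.card → ((⋂ ξ ∈ σ, D ξ) \ C n).Finite

lemma Handled.mono {F F' : Filter S} {C : ℕ → Set S} (h : Handled F C) (hF : F' ≤ F) :
    Handled F' C := by
  rcases h with ⟨n, hn⟩ | ⟨D, hD, h⟩
  · exact Or.inl ⟨n, hF hn⟩
  · exact Or.inr ⟨D, fun ξ => hF (hD ξ), h⟩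

lemma step1 {F : Filter S} {J : Set Cantor} (h : Ind F J) (hJ : J ≠ Set.univ)
    (C : ℕ → Set S) (hC : Antitone C) :
    ∃ F' ≤ F, ∃ j : Finset Cantor, Ind F' (J ∪ j) ∧ Handled F' C := by
  classical
  set F1 : Filter S := F ⊓ ⨅ n, Filter.principal (C n) with hF1
  have hmem : ∀ X ∈ F1, ∃ Y ∈ F, ∃ n, Y ∩ C n ⊆ X := by
    intro X hX
    rw [hF1, Filter.mem_inf_iff] at hX
    obtain ⟨Y, hY, Z, hZ, rfl⟩ := hX
    rw [Filter.mem_iInf_of_directed] at hZ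
    · obtain ⟨n, hn⟩ := hZ
      exact ⟨Y, hY, n, Set.inter_subset_inter_right _ hn⟩
    · intro m n
      exact ⟨max m n, Filter.principal_mono.2 (hC (le_max_left _ _)),
        Filter.principal_mono.2 (hC (le_max_right _ _))⟩
  have hCF : ∀ n, C n ∈ F1 := fun n =>
    (inf_le_right.trans (iInf_le _ n) : F1 ≤ _) (Filter.mem_principal_self _)
  by_cases hI : Ind F1 J
  · obtain ⟨α, hα⟩ := (Set.ne_univ_iff_exists_notMem J).1 hJ
    -- D ξ : points x such that for all m, x ∈ C (m+1) or x ∈ A α ξ (m+1)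
    let D : Cantor → Set S := fun ξ => {x | ∀ m, x ∈ C m ∨ x ∈ A α ξ m}
    refine ⟨F1 ⊓ ⨅ ξ, Filter.principal (D ξ), inf_le_left.trans inf_le_left, {α}, ?_, ?_⟩
    · refine ⟨inf_le_left.trans hI.1, fun X hX b hb n σ hσ => ?_⟩
      rw [Filter.mem_inf_iff] at hX
      obtain ⟨Y, hY, Z, hZ, rfl⟩ := hX
      rw [Filter.mem_iInf_finite] at hZ
      obtain ⟨t, ht⟩ := hZ
      have ht' : (⋂ ξ ∈ t, D ξ) ⊆ Z := by
        rw [Filter.iInf_principal_finset] at ht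
        exact ht
      have hYC : Y ∩ C t.card ∈ F1 := Filter.inter_mem hY (hCF _)
      have := hI.2 _ hYC (insert α b) (by
        intro β hβ
        rcases Finset.mem_insert.1 hβ with rfl | hβ
        · exact hα
        · exact fun h' => hb β hβ (Or.inl h')) (fun β => if β = α then t.card else n β)
        (fun β => if β = α then t else σ β) (by
          intro β hβ
          by_cases h1 : β = α
          · simp [h1]
          · have : β ∈ b := by simpa [h1] using hβ
            simpa [h1] using hσ β this)
      obtain ⟨x, ⟨hxY, hxC⟩, hx2⟩ := this
      simp only [Set.mem_iInter] at hx2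
      refine ⟨x, ⟨hxY, ht' ?_⟩, ?_⟩
      · simp only [Set.mem_iInter]
        intro ξ hξ m
        rcases le_total m t.card with hm | hm
        · exact Or.inl (hC hm hxC)
        · right
          have := hx2 α (Finset.mem_insert_self _ _) ξ (by simpa using hξ)
          simp only [if_true] at this
          exact A_mono _ _ hm this
      · simp only [Set.mem_iInter]
        intro β hβ ξ hξ
        have h1 : β ≠ α := fun h' => hb β hβ (Or.inr (by simp [h']))
        have := hx2 β (Finset.mem_insert_of_mem hβ) ξ (by simpa [h1] using hξ)
        simpa [h1] using this
    · right
      refine ⟨D, fun ξ => (inf_le_right.trans (iInf_le _ ξ) : F1 ⊓ _ ≤ _)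
        (Filter.mem_principal_self _), fun n σ hσ => ?_⟩
      refine (A_linked α n σ hσ).subset ?_
      rintro x ⟨hx, hxC⟩
      simp only [Set.mem_iInter] at hx ⊢
      intro ξ hξ
      exact (hx ξ hξ n).resolve_left hxC
  · have : ∃ X ∈ F1, ∃ a : Finset Cantor, (∀ α ∈ a, α ∉ J) ∧ ∃ (n : Cantor → ℕ)
      (σ : Cantor → Finset Cantor), (∀ α ∈ a, (σ α).card ≤ n α) ∧
      ¬ (X ∩ ⋂ α ∈ a, ⋂ ξ ∈ σ α, A α ξ (n α)).Nonempty := by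
      by_contra hcon
      push Not at hcon
      refine hI ⟨inf_le_left.trans h.1, fun X hX a ha n σ hσ => ?_⟩
      exact hcon X hX a ha n σ hσ
    obtain ⟨X, hX, a, ha, n, σ, hσ, hne⟩ := this
    obtain ⟨Y, hY, m, hYm⟩ := hmem X hX
    refine ⟨_, inf_le_left, a, h.add a ha n σ hσ, Or.inl ⟨m, ?_⟩⟩
    rw [Filter.mem_inf_principal]
    filter_upwards [hY] with x hx hxa hxC
    exact hne ⟨x, hYm ⟨hx, hxC⟩, hxa⟩

lemma step2 {F : Filter S} {J : Set Cantor} (h : Ind F J) (hJ : J ≠ Set.univ)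
    (r : Ultrafilter S) (hr : (r : Filter S) ≤ Filter.cofinite) :
    ∃ F' ≤ F, ∃ j : Finset Cantor, Ind F' (J ∪ j) ∧ ∃ X ∈ F', X ∉ r := by
  classical
  obtain ⟨α, hα⟩ := (Set.ne_univ_iff_exists_notMem J).1 hJ
  have key : ∃ ξ, A α ξ 1 ∉ r := by
    by_contra hcon
    push Not at hcon
    have h1 := A_linked α 1 {fun _ => true, fun _ => false} (by
      rw [Finset.card_pair]
      · norm_num
      · intro h; simpa using congrFun h 0)
    have h2 := hr h1.compl_mem_cofinite
    have h3 : (A α (fun _ => true) 1 ∩ A α (fun _ => false) 1) ∈ (r : Filter S) :=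
      Filter.inter_mem (hcon _) (hcon _)
    obtain ⟨x, hx1, hx2⟩ := r.nonempty_of_mem (Filter.inter_mem h2 h3)
    apply hx1
    simpa using hx2
  obtain ⟨ξ, hξ⟩ := key
  refine ⟨_, inf_le_left, {α}, h.add {α} (by simpa using hα) (fun _ => 1) (fun _ => {ξ}) (by simp),
    A α ξ 1, ?_, hξ⟩
  rw [Filter.mem_inf_principal]
  simp

lemma step {F : Filter S} {J : Set Cantor} (h : Ind F J) (hJ : ∀ j : Finset Cantor, J ∪ j ≠ Set.univ)
    (C : ℕ → Set S) (r : Ultrafilter S) :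
    ∃ F' ≤ F, ∃ j : Finset Cantor, Ind F' (J ∪ j) ∧ (Antitone C → Handled F' C) ∧
     ((r : Filter S) ≤ Filter.cofinite → ∃ X ∈ F', X ∉ r) := by
  classical
  have h1 : ∃ F' ≤ F, ∃ j : Finset Cantor, Ind F' (J ∪ j) ∧ (Antitone C → Handled F' C) := by
    by_cases hC : Antitone C
    · obtain ⟨F', hF, j, hj, hh⟩ := step1 h (by simpa using hJ ∅) C hC
      exact ⟨F', hF, j, hj, fun _ => hh⟩
    · exact ⟨F, le_rfl, ∅, by simpa using h, fun h' => absurd h' hC⟩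
  obtain ⟨F', hF, j, hj, hh⟩ := h1
  by_cases hr : (r : Filter S) ≤ Filter.cofinite
  · obtain ⟨F'', hF', j', hj', X, hX, hXr⟩ := step2 hj (hJ j) r hr
    refine ⟨F'', hF'.trans hF, j ∪ j', ?_, fun hC => (hh hC).mono hF', fun _ => ⟨X, hX, hXr⟩⟩
    rw [Finset.coe_union, ← Set.union_assoc]; exact hj'
  · exact ⟨F', hF, j, hj, hh, fun h' => absurd h' hr⟩


lemma ind_iInf {ι : Type} (F : ι → Filter S) (J : Set Cantor) (hd : Directed (· ≥ ·) F)
    (h : ∀ i, Ind (F i) J) : Ind (Filter.cofinite ⊓ ⨅ i, F i) J := by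
  rcases isEmpty_or_nonempty ι with hι | hι
  · rw [iInf_of_empty, inf_top_eq]
    exact ind_base.mono (Set.empty_subset _)
  · have : (Filter.cofinite ⊓ ⨅ i, F i) = ⨅ i, F i :=
      inf_eq_right.2 ((iInf_le F hι.some).trans (h _).1)
    rw [this]
    refine ⟨(iInf_le F hι.some).trans (h _).1, fun X hX => ?_⟩
    rw [Filter.mem_iInf_of_directed hd] at hX
    obtain ⟨i, hi⟩ := hX
    exact (h i).2 X hi

lemma mk_cantor : #Cantor = 𝔠 := by simp

def WeakP {S : Type*} (p : Ultrafilter S) : Prop :=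
  ∀ Q : Set (Ultrafilter S), Q.Countable → (∀ q ∈ Q, q ≠ p ∧ (q : Filter S) ≤ Filter.cofinite) →
    ∃ C ∈ p, ∀ q ∈ Q, C ∉ q

lemma weakP_of_handled (p : Ultrafilter S)
    (h : ∀ C : ℕ → Set S, Antitone C → Handled p C) : WeakP p := by
  classical
  intro Q hQ hq
  rcases Q.eq_empty_or_nonempty with rfl | hne
  · exact ⟨Set.univ, Filter.univ_mem, by simp⟩
  obtain ⟨q, rfl⟩ := hQ.exists_eq_range hne
  have hB : ∀ i, ∃ B ∈ p, B ∉ q i := by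
    intro i
    by_contra hcon
    push Not at hcon
    exact (hq (q i) ⟨i, rfl⟩).1 (Ultrafilter.coe_le_coe.1 (fun B hB => hcon B hB))
  choose B hBp hBq using hB
  have hC := h (fun n => ⋂ i ∈ Finset.range (n + 1), B i) (by
    intro m n hmn x hx
    simp only [Set.mem_iInter, Finset.mem_range] at hx ⊢
    intro i hi
    exact hx i (by omega))
  rcases hC with ⟨n, hn⟩ | ⟨D, hD, hDf⟩
  · exfalso
    have : (⋂ i ∈ Finset.range (n + 1), B i) ∈ p :=
      (Filter.biInter_finset_mem _).2 fun i _ => hBp i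
    exact Ultrafilter.compl_notMem_iff.2 this hn
  · have hfin : ∀ i, {ξ | D ξ ∈ q i}.Finite := by
      intro i
      by_contra hinf
      obtain ⟨σ, hσ, hcard⟩ := Set.Infinite.exists_subset_card_eq hinf (i + 1)
      have h1 := hDf i σ (by omega)
      have h2 : (⋂ ξ ∈ σ, D ξ) ∈ (q i : Filter S) :=
        (Filter.biInter_finset_mem _).2 fun ξ hξ => hσ hξ
      have h3 := (hq (q i) ⟨i, rfl⟩).2 h1.compl_mem_cofinite
      refine hBq i ?_
      filter_upwards [h2, h3] with x hx2 hx3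
      by_contra hx
      refine hx3 ⟨hx2, fun hx' => hx ?_⟩
      simp only [Set.mem_iInter, Finset.mem_range] at hx'
      exact hx' i (by omega)
    have hcount : (⋃ i, {ξ | D ξ ∈ q i}).Countable := Set.countable_iUnion fun i => (hfin i).countable
    have hne : (⋃ i, {ξ | D ξ ∈ q i}) ≠ Set.univ := by
      intro he
      rw [he] at hcount
      have := hcount.le_aleph0
      rw [Cardinal.mk_univ, mk_cantor] at this
      exact absurd this (not_le.2 Cardinal.aleph0_lt_continuum)
    obtain ⟨ξ, hξ⟩ := (Set.ne_univ_iff_exists_notMem _).1 hne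
    refine ⟨D ξ, hD ξ, ?_⟩
    rintro _ ⟨i, rfl⟩ hi
    exact hξ (Set.mem_iUnion.2 ⟨i, hi⟩)

theorem exists_weakP (r : Cantor → Ultrafilter S) :
    ∃ p : Ultrafilter S, (p : Filter S) ≤ Filter.cofinite ∧ WeakP p ∧ ∀ i, p ≠ r i := by
  classical
  let Θ := (𝔠 : Cardinal.{0}).ord.ToType
  have hΘ : #Θ = 𝔠 := Cardinal.mk_ord_toType _
  have hT : #((ℕ → Set S) × Cantor) = 𝔠 := by
    have : #S ≤ ℵ₀ := Cardinal.mk_le_aleph0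
    have hS : #S = ℵ₀ := by
      refine le_antisymm this (Cardinal.infinite_iff.1 ?_)
      exact Infinite.of_injective (fun k : ℕ => (⟨k, fun _ => ∅⟩ : S)) (fun a b h => by
        exact congrArg Sigma.fst h)
    simp [hS]
  obtain ⟨e⟩ : Nonempty (Θ ≃ (ℕ → Set S) × Cantor) := Cardinal.eq.1 (hΘ.trans hT.symm)
  have hg : ∀ (F : Filter S) (J : Set Cantor) (θ : Θ), ∃ q : Filter S × Finset Cantor,
      q.1 ≤ F ∧ (Ind F J → (∀ j : Finset Cantor, J ∪ j ≠ Set.univ) →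
        Ind q.1 (J ∪ q.2) ∧ (Antitone (e θ).1 → Handled q.1 (e θ).1) ∧
        ((r (e θ).2 : Filter S) ≤ Filter.cofinite → ∃ X ∈ q.1, X ∉ r (e θ).2)) := by
    intro F J θ
    by_cases h : Ind F J ∧ (∀ j : Finset Cantor, J ∪ j ≠ Set.univ)
    · obtain ⟨F', hF, j, h1, h2, h3⟩ := step h.1 h.2 (e θ).1 (r (e θ).2)
      exact ⟨(F', j), hF, fun _ _ => ⟨h1, h2, h3⟩⟩
    · exact ⟨(F, ∅), le_rfl, fun h1 h2 => absurd ⟨h1, h2⟩ h⟩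
  choose g hg1 hg2 using hg
  have wf : WellFounded ((· < ·) : Θ → Θ → Prop) := wellFounded_lt
  let st : Θ → Filter S × Finset Cantor := wf.fix (fun μ ih =>
    g (Filter.cofinite ⊓ ⨅ ν : Set.Iio μ, (ih ν.1 ν.2).1) (⋃ ν : Set.Iio μ, ((ih ν.1 ν.2).2 : Set Cantor)) μ)
  let Fm : Θ → Filter S := fun μ => Filter.cofinite ⊓ ⨅ ν : Set.Iio μ, (st ν.1).1
  let Jm : Θ → Set Cantor := fun μ => ⋃ ν : Set.Iio μ, ((st ν.1).2 : Set Cantor)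
  have hst : ∀ μ, st μ = g (Fm μ) (Jm μ) μ := fun μ => wf.fix_eq _ μ
  have hle : ∀ ν μ, ν < μ → (st μ).1 ≤ (st ν).1 := by
    intro ν μ h
    rw [hst μ]
    refine (hg1 _ _ _).trans (inf_le_right.trans ?_)
    exact iInf_le (fun ν : Set.Iio μ => (st ν.1).1) ⟨ν, h⟩
  have hle' : ∀ ν μ, ν ≤ μ → (st μ).1 ≤ (st ν).1 := by
    intro ν μ h
    rcases h.eq_or_lt with rfl | h
    · exact le_rfl
    · exact hle _ _ h
  have hcard : ∀ μ, ∀ j : Finset Cantor, Jm μ ∪ j ≠ Set.univ := by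
    intro μ j he
    have h1 : #(Jm μ ∪ j : Set Cantor) < 𝔠 := by
      refine (Cardinal.mk_union_le _ _).trans_lt ?_
      refine Cardinal.add_lt_of_lt Cardinal.aleph0_le_continuum ?_ ?_
      · refine (Cardinal.mk_iUnion_le _).trans_lt ?_
        refine Cardinal.mul_lt_of_lt Cardinal.aleph0_le_continuum ?_ ?_
        · have := Cardinal.mk_Iio_lt μ (by rw [hΘ]; simp [Θ])
          rwa [hΘ] at this
        · refine lt_of_le_of_lt (ciSup_le' fun ν => ?_) Cardinal.aleph0_lt_continuum
          exact (Set.Finite.countable (Finset.finite_toSet _)).le_aleph0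
      · exact ((Finset.finite_toSet j).countable.le_aleph0).trans_lt Cardinal.aleph0_lt_continuum
    rw [he, Cardinal.mk_univ, mk_cantor] at h1
    exact lt_irrefl _ h1
  have hInd : ∀ μ, Ind (st μ).1 (Jm μ ∪ (st μ).2) ∧ Ind (Fm μ) (Jm μ) := by
    intro μ
    induction μ using wf.induction with
    | _ μ ih =>
    have h1 : Ind (Fm μ) (Jm μ) := by
      refine ind_iInf (fun ν : Set.Iio μ => (st ν.1).1) _ ?_ ?_
      · intro a b
        rcases le_total a b with h | h
        · exact ⟨b, hle' _ _ h, le_rfl⟩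
        · exact ⟨a, le_rfl, hle' _ _ h⟩
      · intro ν
        refine (ih ν.1 ν.2).1.mono ?_
        apply Set.union_subset
        · intro x hx
          obtain ⟨κ, hκ⟩ := Set.mem_iUnion.1 hx
          exact Set.mem_iUnion.2 ⟨⟨κ.1, Set.mem_Iio.2 (lt_trans (Set.mem_Iio.1 κ.2) (Set.mem_Iio.1 ν.2))⟩, hκ⟩
        · intro x hx
          exact Set.mem_iUnion.2 ⟨ν, hx⟩
    refine ⟨?_, h1⟩
    have := (hg2 (Fm μ) (Jm μ) μ h1 (hcard μ)).1
    rw [← hst μ] at this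
    exact this
  have hfin : Ind (Filter.cofinite ⊓ ⨅ ν, (st ν).1) Set.univ := by
    refine ind_iInf (fun ν => (st ν).1) _ ?_ ?_
    · intro a b
      rcases le_total a b with h | h
      · exact ⟨b, hle' _ _ h, le_rfl⟩
      · exact ⟨a, le_rfl, hle' _ _ h⟩
    · intro ν
      exact (hInd ν).1.mono (Set.subset_univ _)
  have hne : (Filter.cofinite ⊓ ⨅ ν, (st ν).1).NeBot := by
    rw [← Filter.forall_mem_nonempty_iff_neBot]
    intro X hX
    simpa using hfin.2 X hX ∅ (by simp) (fun _ => 0) (fun _ => ∅) (by simp)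
  have hpF := Ultrafilter.of_le (Filter.cofinite ⊓ ⨅ ν, (st ν).1)
  refine ⟨Ultrafilter.of (Filter.cofinite ⊓ ⨅ ν, (st ν).1), hpF.trans inf_le_left, ?_, ?_⟩
  · refine weakP_of_handled _ fun C hC => ?_
    obtain ⟨θ, hθ⟩ := e.surjective (C, fun _ => true)
    have h2 := (hg2 (Fm θ) (Jm θ) θ (hInd θ).2 (hcard θ)).2.1 (by rw [hθ]; exact hC)
    rw [← hst θ, hθ] at h2
    exact h2.mono (hpF.trans (inf_le_right.trans (iInf_le (fun ν => (st ν).1) θ)))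
  · intro i hi
    obtain ⟨θ, hθ⟩ := e.surjective (fun _ => ∅, i)
    have h2 := (hg2 (Fm θ) (Jm θ) θ (hInd θ).2 (hcard θ)).2.2
    rw [← hst θ, hθ] at h2
    obtain ⟨X, hX, hXr⟩ := h2 (by
      simp only; rw [← hi]; exact hpF.trans inf_le_left)
    refine hXr ?_
    simp only
    rw [← hi]
    exact (hpF.trans (inf_le_right.trans (iInf_le (fun ν => (st ν).1) θ)) : _ ≤ (st θ).1) hX

end Kunen

namespace TreeSpace
open Kunen Filter Topology

variable {S : Type}

/-- The tree of finite sequences, topologised by a family of ultrafilters. -/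
def Tr (_ : List S → Ultrafilter S) : Type := List S

/-- free weak P-points at all nodes -/
def Good (p : List S → Ultrafilter S) : Prop :=
  ∀ s, (p s : Filter S) ≤ cofinite ∧ WeakP (p s)

variable (p : List S → Ultrafilter S)

/-- forget -/
def ls (s : Tr p) : List S := s
/-- unforget -/
def mk (s : List S) : Tr p := s

instance : TopologicalSpace (Tr p) where
  IsOpen U := ∀ s : List S, mk p s ∈ U → ∀ᶠ n in (p s : Filter S), mk p (n :: s) ∈ U
  isOpen_univ := by intro s _; simp
  isOpen_inter := by
    intro U V hU hV s hs
    filter_upwards [hU s hs.1, hV s hs.2] with n h1 h2 using ⟨h1, h2⟩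
  isOpen_sUnion := by
    intro 𝒰 h s hs
    obtain ⟨U, hU, hsU⟩ := hs
    filter_upwards [h U hU s hsU] with n hn using ⟨U, hU, hn⟩

lemma isOpen_iff {U : Set (Tr p)} :
    IsOpen U ↔ ∀ s : List S, mk p s ∈ U → ∀ᶠ n in (p s : Filter S), mk p (n :: s) ∈ U := Iff.rfl

lemma tendsto_child (s : List S) : Tendsto (fun n => mk p (n :: s)) (p s) (𝓝 (mk p s)) := by
  rw [tendsto_nhds]
  intro U hU hs
  exact (isOpen_iff p).1 hU s hs

lemma continuous_iff_child {Z : Type*} [TopologicalSpace Z] {f : Tr p → Z} :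
    Continuous f ↔ ∀ s : List S, Tendsto (fun n => f (mk p (n :: s))) (p s) (𝓝 (f (mk p s))) := by
  constructor
  · intro h s
    exact (h.tendsto _).comp (tendsto_child p s)
  · intro h
    refine ⟨fun O hO => (isOpen_iff p).2 fun s hs => ?_⟩
    exact h s (hO.mem_nhds hs)

instance [Countable S] : Countable (Tr p) := inferInstanceAs (Countable (List S))

lemma tr_ed : ExtremallyDisconnected (Tr p) := by
  refine ⟨fun U hU => (isOpen_iff p).2 fun s hs => ?_⟩
  by_contra hcon
  have hcon' : ∀ᶠ n in (p s : Filter S), mk p (n :: s) ∉ closure U :=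
    Ultrafilter.eventually_not.2 hcon
  by_cases hsU : mk p s ∈ U
  · have h1 := (isOpen_iff p).1 hU s hsU
    obtain ⟨n, h1, h2⟩ := (h1.and hcon').exists
    exact h2 (subset_closure h1)
  · have hV : IsOpen (insert (mk p s) (closure U)ᶜ) := by
      refine (isOpen_iff p).2 fun t ht => ?_
      rcases ht with ht | ht
      · have : t = s := ht
        subst this
        filter_upwards [hcon'] with n hn using Or.inr hn
      · have h2 := (isOpen_iff p).1 (isClosed_closure (s := U)).isOpen_compl t ht
        filter_upwards [h2] with n hn using Or.inr hn
    obtain ⟨x, hx1, hx2⟩ := mem_closure_iff.1 hs _ hV (Set.mem_insert _ _)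
    rcases hx1 with rfl | hx1
    · exact hsU hx2
    · exact hx1 (subset_closure hx2)

/-- The compact space. -/
abbrev X := StoneCech (Tr p)

/-- The points of the tree in the compact space. -/
def pt (s : List S) : X p := stoneCechUnit (mk p s)

lemma tendsto_pt (s : List S) : Tendsto (fun n => pt p (n :: s)) (p s) (𝓝 (pt p s)) :=
  (continuous_stoneCechUnit.tendsto _).comp (tendsto_child p s)

lemma dense_pt : DenseRange (pt p) := denseRange_stoneCechUnit (α := Tr p)

lemma clopen_ext {K : Set (Tr p)} (hK : IsClopen K) :
    ∃ W : Set (X p), IsClopen W ∧ ∀ s, pt p s ∈ W ↔ mk p s ∈ K := by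
  classical
  let f : Tr p → Bool := fun s => decide (s ∈ K)
  have hf : Continuous f := by
    rw [continuous_bool_rng true]
    convert hK using 1
    ext s; simp [f]
  refine ⟨stoneCechExtend hf ⁻¹' {true},
    (isClopen_discrete _).preimage (continuous_stoneCechExtend hf), fun s => ?_⟩
  simp [pt, stoneCechExtend_stoneCechUnit, f]

lemma open_inter_pt {O : Set (X p)} (hO : IsOpen O) (h : O.Nonempty) : ∃ s, pt p s ∈ O := by
  obtain ⟨x, hx, s, rfl⟩ := (dense_pt p).inter_open_nonempty O hO h
  exact ⟨s, hx⟩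

/-- For an open set of the tree, its closure in `X` contains a corresponding open set. -/
lemma open_ext {U : Set (Tr p)} (hU : IsOpen U) :
    ∃ O : Set (X p), IsOpen O ∧ O ⊆ closure (stoneCechUnit '' U) ∧ stoneCechUnit '' U ⊆ O := by
  have hc : IsClopen (closure U) := ⟨isClosed_closure, (tr_ed p).open_closure U hU⟩
  obtain ⟨W, hW, hWs⟩ := clopen_ext p hc
  refine ⟨W, hW.isOpen, ?_, ?_⟩
  · intro x hx
    rw [mem_closure_iff]
    intro O hO hxO
    obtain ⟨s, hs⟩ := open_inter_pt p (hO.inter hW.isOpen) ⟨x, hxO, hx⟩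
    have h1 := (hWs s).1 hs.2
    obtain ⟨t, ht1, ht2⟩ := mem_closure_iff.1 h1 (stoneCechUnit ⁻¹' O)
      (hO.preimage continuous_stoneCechUnit) hs.1
    exact ⟨_, ht1, t, ht2, rfl⟩
  · rintro _ ⟨s, hs, rfl⟩
    exact (hWs s).2 (subset_closure hs)

instance x_ed : ExtremallyDisconnected (X p) := by
  refine ⟨fun O hO => ?_⟩
  have hc : IsClopen (closure (stoneCechUnit (α := Tr p) ⁻¹' O)) :=
    ⟨isClosed_closure, (tr_ed p).open_closure _ (hO.preimage continuous_stoneCechUnit)⟩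
  obtain ⟨W, hW, hWs⟩ := clopen_ext p hc
  have : closure O = W := by
    apply Set.Subset.antisymm
    · refine closure_minimal ?_ hW.isClosed
      intro x hx
      by_contra hxW
      obtain ⟨s, hs1, hs2⟩ := open_inter_pt p (hO.inter hW.isClosed.isOpen_compl) ⟨x, hx, hxW⟩
      exact hs2 ((hWs s).2 (subset_closure hs1))
    · intro x hx
      rw [mem_closure_iff]
      intro O' hO' hxO'
      obtain ⟨s, hs1, hs2⟩ := open_inter_pt p (hO'.inter hW.isOpen) ⟨x, hxO', hx⟩
      have h1 := (hWs s).1 hs2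
      obtain ⟨t, ht1, ht2⟩ := mem_closure_iff.1 h1 (stoneCechUnit ⁻¹' O')
        (hO'.preimage continuous_stoneCechUnit) hs1
      exact ⟨_, ht1, ht2⟩
  rw [this]
  exact hW.isOpen

instance [Countable S] : SeparableSpace (X p) :=
  ⟨⟨Set.range (pt p), Set.countable_range (pt p), dense_pt p⟩⟩

variable {p}

lemma isClopen_cone (hp : Good p) (t : List S) : IsClopen {u : Tr p | t <:+ ls p u} := by
  constructor
  · rw [← isOpen_compl_iff, isOpen_iff]
    intro s hs
    have h1 : ∀ᶠ n in (p s : Filter S), n ∉ {n | n :: s = t} := by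
      apply (hp s).1
      refine Set.Subsingleton.finite ?_ |>.compl_mem_cofinite
      intro a ha b hb
      have : a :: s = b :: s := ha.trans hb.symm
      exact (List.cons.inj this).1
    filter_upwards [h1] with n hn hcon
    rcases List.suffix_cons_iff.1 hcon with h | h
    · exact hn h.symm
    · exact hs h
  · rw [isOpen_iff]
    intro s hs
    exact Eventually.of_forall fun n => List.IsSuffix.trans hs (List.suffix_cons _ _)

/-- Clopen cones in `X`. -/
lemma exists_W (hp : Good p) : ∃ W : List S → Set (X p), (∀ t, IsClopen (W t)) ∧
    ∀ t s, pt p s ∈ W t ↔ t <:+ s := by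
  have := fun t => clopen_ext p (isClopen_cone hp t)
  choose W h1 h2 using this
  exact ⟨W, h1, fun t s => h2 t s⟩

lemma suffix_cons_cons {m n : S} {t u : List S} (h1 : m :: t <:+ u) (h2 : n :: t <:+ u) : m = n := by
  have := List.suffix_of_suffix_length_le h1 h2 (by simp)
  have := this.eq_of_length (by simp)
  exact (List.cons.inj this).1

lemma pt_injective (hp : Good p) : Function.Injective (pt p) := by
  intro s t h
  obtain ⟨W, -, hW⟩ := exists_W hp
  have h1 : s <:+ t := (hW s t).1 (h ▸ (hW s s).2 List.suffix_rfl)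
  have h2 : t <:+ s := (hW t s).1 (h ▸ (hW t t).2 List.suffix_rfl)
  exact h1.eq_of_length (le_antisymm h1.length_le h2.length_le)

/-- The projection to ultrafilters at a node. -/
lemma exists_proj (_hp : Good p) (t : List S) : ∃ f : X p → Ultrafilter S, Continuous f ∧
    f (pt p t) = p t ∧ ∀ m, f (pt p (m :: t)) = pure m := by
  classical
  let g : Tr p → Ultrafilter S := fun u =>
    if h : ∃ m, m :: t <:+ ls p u then pure h.choose else p t
  have g1 : ∀ m (u : List S), m :: t <:+ u → g (mk p u) = pure m := by
    intro m u h
    have h' : ∃ m, m :: t <:+ ls p (mk p u) := ⟨m, h⟩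
    have : h'.choose = m := suffix_cons_cons h'.choose_spec h
    simp only [g]
    rw [dif_pos h', this]
  have g2 : ∀ u : List S, ¬ (∃ m, m :: t <:+ u) → g (mk p u) = p t := by
    intro u h
    exact dif_neg h
  have gt : g (mk p t) = p t := by
    apply g2
    rintro ⟨m, hm⟩
    have := hm.length_le
    simp at this
  have hg : Continuous g := by
    rw [continuous_iff_child]
    intro s
    by_cases h : ∃ m, m :: t <:+ s
    · obtain ⟨m, hm⟩ := h
      rw [g1 m s hm]
      refine tendsto_const_nhds.congr fun n => ?_
      exact (g1 m _ (hm.trans (List.suffix_cons _ _))).symm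
    · by_cases hs : s = t
      · subst hs
        rw [gt]
        refine (Ultrafilter.tendsto_pure_self (p s)).congr fun n => ?_
        exact (g1 n _ List.suffix_rfl).symm
      · rw [g2 s h]
        refine tendsto_const_nhds.congr fun n => ?_
        refine (g2 _ ?_).symm
        rintro ⟨m, hm⟩
        rcases List.suffix_cons_iff.1 hm with h' | h'
        · exact hs (List.cons.inj h').2.symm
        · exact h ⟨m, h'⟩
  refine ⟨stoneCechExtend hg, continuous_stoneCechExtend hg, ?_, fun m => ?_⟩
  · simpa [pt, stoneCechExtend_stoneCechUnit] using gt
  · simpa [pt, stoneCechExtend_stoneCechUnit] using g1 m _ List.suffix_rfl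

/-- the children of `t`. -/
def Y (p : List S → Ultrafilter S) (t : List S) : Set (X p) := Set.range fun m => pt p (m :: t)

lemma weakP_X (hp : Good p) (t : List S) (D : Set (X p)) (hD : D.Countable)
    (h : ∀ x ∈ D, x ∈ closure (Y p t) ∧ x ∉ Y p t ∧ x ≠ pt p t) : pt p t ∉ closure D := by
  obtain ⟨f, hf, hft, hfm⟩ := exists_proj hp t
  have key : ∀ x ∈ D, f x ≠ p t ∧ (f x : Filter S) ≤ cofinite := by
    intro x hx
    obtain ⟨h1, h2, h3⟩ := h x hx
    obtain ⟨q, hq⟩ : ∃ q : Ultrafilter S, Tendsto (fun m => pt p (m :: t)) q (𝓝 x) := by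
      have hne : (comap (fun m => pt p (m :: t)) (𝓝 x)).NeBot := by
        refine comap_neBot fun V hV => ?_
        obtain ⟨_, hy, m, rfl⟩ := mem_closure_iff_nhds.1 h1 V hV
        exact ⟨m, hy⟩
      exact ⟨Ultrafilter.of _, tendsto_iff_comap.2 (Ultrafilter.of_le _)⟩
    have hfx : f x = q := by
      have h4 : Tendsto (fun m => f (pt p (m :: t))) q (𝓝 (f x)) := (hf.tendsto x).comp hq
      simp only [hfm] at h4
      exact tendsto_nhds_unique h4 (Ultrafilter.tendsto_pure_self q)
    rw [hfx]
    constructor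
    · rintro rfl
      exact h3 (tendsto_nhds_unique hq (tendsto_pt p t))
    · rcases Ultrafilter.le_cofinite_or_eq_pure q with h5 | ⟨m, rfl⟩
      · exact h5
      · exfalso
        apply h2
        refine ⟨m, ?_⟩
        have h6 : Tendsto (fun m => pt p (m :: t)) ((pure m : Ultrafilter S) : Filter S)
          (𝓝 (pt p (m :: t))) := by
          rw [Ultrafilter.coe_pure]; exact tendsto_pure_nhds _ _
        exact tendsto_nhds_unique h6 hq
  obtain ⟨C, hC, hCq⟩ := (hp t).2 (f '' D) (hD.image f) (by
    rintro _ ⟨x, hx, rfl⟩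
    exact key x hx)
  intro hcl
  obtain ⟨x, hx1, hx2⟩ := mem_closure_iff.1 hcl (f ⁻¹' {q | C ∈ q})
    ((ultrafilter_isOpen_basic C).preimage hf) (by
      change C ∈ f (pt p t)
      rw [hft]; exact hC)
  exact hCq _ ⟨x, hx2, rfl⟩ hx1

/-- Countable separated sets in a regular extremally disconnected space have disjoint closures. -/
lemma sep {Z : Type*} [TopologicalSpace Z] [RegularSpace Z] [ExtremallyDisconnected Z]
    {D E : Set Z} (hD : D.Countable) (hE : E.Countable)
    (h1 : ∀ x ∈ D, x ∉ closure E) (h2 : ∀ x ∈ E, x ∉ closure D) :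
    Disjoint (closure D) (closure E) := by
  have cover : ∀ {D E : Set Z}, D.Countable → (∀ x ∈ D, x ∉ closure E) → HasSeparatingCover D E := by
    intro D E hD h
    rcases D.eq_empty_or_nonempty with rfl | hne
    · exact Set.hasSeparatingCover_empty_left E
    obtain ⟨d, rfl⟩ := hD.exists_eq_range hne
    have : ∀ n, ∃ u : Set Z, d n ∈ u ∧ IsOpen u ∧ Disjoint (closure u) E := by
      intro n
      obtain ⟨V, hV, hVc, hVs⟩ := exists_mem_nhds_isClosed_subset
        ((isClosed_closure (s := E)).isOpen_compl.mem_nhds (h (d n) ⟨n, rfl⟩))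
      refine ⟨interior V, mem_interior_iff_mem_nhds.2 hV, isOpen_interior, ?_⟩
      rw [Set.disjoint_left]
      intro x hx hxE
      exact hVs (closure_minimal interior_subset hVc hx) (subset_closure hxE)
    choose u hu1 hu2 hu3 using this
    refine ⟨u, ?_, fun n => ⟨hu2 n, hu3 n⟩⟩
    rintro _ ⟨n, rfl⟩
    exact Set.mem_iUnion.2 ⟨n, hu1 n⟩
  obtain ⟨U, V, hU, hV, hDU, hEV, hUV⟩ :=
    hasSeparatingCovers_iff_separatedNhds.1 ⟨cover hD h1, cover hE h2⟩
  exact (ExtremallyDisconnected.disjoint_closure_of_disjoint_isOpen hUV hU hV).mono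
    (closure_mono hDU) (closure_mono hEV)

lemma pt_mem_closure_Y (t : List S) : pt p t ∈ closure (Y p t) :=
  mem_closure_of_tendsto (tendsto_pt p t) (Eventually.of_forall fun m => ⟨m, rfl⟩)

lemma L1 [Countable S] (hp : Good p) {W : List S → Set (X p)} (hWc : ∀ t, IsClopen (W t))
    (hW : ∀ t s, pt p s ∈ W t ↔ t <:+ s) (t : List S) (D : Set (X p)) (hD : D.Countable)
    (htD : pt p t ∉ D) (hDW : ∀ x ∈ D, ∀ m, x ∉ W (m :: t)) : pt p t ∉ closure D := by
  have hYW : ∀ m, pt p (m :: t) ∈ W (m :: t) := fun m => (hW _ _).2 List.suffix_rfl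
  have hDY : ∀ x ∈ D, x ∉ Y p t := by
    rintro x hx ⟨m, rfl⟩
    exact hDW _ hx m (hYW m)
  have e : D = (D ∩ closure (Y p t)) ∪ (D \ closure (Y p t)) := (Set.inter_union_sdiff _ _).symm
  rw [e, closure_union]
  rintro (h | h)
  · refine weakP_X hp t _ (hD.mono Set.inter_subset_left) ?_ h
    intro x hx
    exact ⟨hx.2, hDY x hx.1, fun h => htD (h ▸ hx.1)⟩
  · have := sep (D := D \ closure (Y p t)) (E := Y p t) (hD.mono Set.sdiff_subset)
      (Set.countable_range _) (fun x hx => hx.2) (by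
        rintro _ ⟨m, rfl⟩ hm
        obtain ⟨x, hx1, hx2⟩ := mem_closure_iff.1 hm _ (hWc (m :: t)).isOpen (hYW m)
        exact hDW x hx2.1 m hx1)
    exact Set.disjoint_left.1 this h (pt_mem_closure_Y t)

/-- A countable set disjoint from the tree is nowhere dense. -/
lemma L3 [Countable S] (hp : Good p) (D : Set (X p)) (hD : D.Countable)
    (hDT : ∀ s, pt p s ∉ D) (O : Set (X p)) (hO : IsOpen O) (hne : O.Nonempty) :
    ∃ O' ⊆ O, IsOpen O' ∧ O'.Nonempty ∧ Disjoint O' D := by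
  rcases D.eq_empty_or_nonempty with rfl | hDne
  · exact ⟨O, subset_rfl, hO, hne, by simp⟩
  obtain ⟨x, rfl⟩ := hD.exists_eq_range hDne
  obtain ⟨W, hWc, hW⟩ := exists_W hp
  obtain ⟨t0, ht0⟩ := open_inter_pt p hO hne
  have hV : ∀ t, ∃ V : Set (X p), IsOpen V ∧ pt p t ∈ V ∧
      ∀ i, x i ∈ closure V → ∃ m, x i ∈ W (m :: t) := by
    intro t
    have := L1 hp hWc hW t {y | y ∈ Set.range x ∧ ∀ m, y ∉ W (m :: t)}
      (hD.mono fun y hy => hy.1) (fun h => hDT t h.1) (fun y hy => hy.2)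
    obtain ⟨V, hV, hVc, hVs⟩ := exists_mem_nhds_isClosed_subset
        ((isClosed_closure).isOpen_compl.mem_nhds this)
    refine ⟨interior V, isOpen_interior, mem_interior_iff_mem_nhds.2 hV, fun i hi => ?_⟩
    by_contra hcon
    push Not at hcon
    exact hVs (closure_minimal interior_subset hVc hi) (subset_closure ⟨⟨i, rfl⟩, hcon⟩)
  choose V hVo hVt hVx using hV
  let ok : List S → Prop := fun v => (∀ t, t0 <:+ t → t <:+ v → pt p v ∈ V t) ∧
    (∀ t n, v = n :: t → t0 <:+ t → ∀ i ≤ t.length, x i ∉ W v)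
  let U : Set (Tr p) := {u | t0 <:+ ls p u ∧ ∀ v, t0 <:+ v → v <:+ ls p u → ok v}
  have hU : IsOpen U := by
    rw [isOpen_iff]
    rintro u ⟨hu1, hu2⟩
    change t0 <:+ u at hu1
    change ∀ v, t0 <:+ v → v <:+ u → ok v at hu2
    have e1 : ∀ᶠ n in (p u : Filter S), ∀ t ∈ {t | t <:+ u}, t0 <:+ t → pt p (n :: u) ∈ V t := by
      have hfin : {t : List S | t <:+ u}.Finite := by
        refine (List.finite_toSet u.tails).subset fun t ht => ?_
        exact (List.mem_tails t u).2 ht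
      rw [eventually_all_finite hfin]
      intro t ht
      by_cases h0 : t0 <:+ t
      · have h3 := (hu2 u hu1 List.suffix_rfl).1 t h0 ht
        filter_upwards [tendsto_pt p u ((hVo t).mem_nhds h3)] with n hn _ using hn
      · exact Eventually.of_forall fun n h => absurd h h0
    have e2 : ∀ᶠ n in (p u : Filter S), ∀ i ∈ Set.Iic u.length, x i ∉ W (n :: u) := by
      rw [eventually_all_finite (Set.finite_Iic _)]
      intro i _
      apply (hp u).1
      change {n | x i ∉ W (n :: u)} ∈ cofinite
      have hs : {n | x i ∈ W (n :: u)}.Subsingleton := by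
        intro a ha b hb
        obtain ⟨s, hs1, hs2⟩ := open_inter_pt p ((hWc (a :: u)).isOpen.inter (hWc (b :: u)).isOpen)
          ⟨x i, ha, hb⟩
        exact suffix_cons_cons ((hW _ _).1 hs1) ((hW _ _).1 hs2)
      exact hs.finite.compl_mem_cofinite
    filter_upwards [e1, e2] with n h1 h2
    refine ⟨hu1.trans (List.suffix_cons _ _), fun v hv1 hv2 => ?_⟩
    rcases List.suffix_cons_iff.1 hv2 with h | h
    · subst h
      refine ⟨fun t ht1 ht2 => ?_, fun t m he ht i hi => ?_⟩
      · rcases List.suffix_cons_iff.1 ht2 with h | h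
        · rw [h]; exact hVt _
        · exact h1 t h ht1
      · obtain ⟨rfl, rfl⟩ := List.cons.inj he
        exact h2 i hi
    · exact hu2 v hv1 h
  have ht0U : mk p t0 ∈ U := by
    refine ⟨List.suffix_rfl, fun v hv1 hv2 => ?_⟩
    have hv2 : v <:+ t0 := hv2
    have : v = t0 := hv2.eq_of_length (le_antisymm hv2.length_le hv1.length_le)
    subst this
    refine ⟨fun t ht1 ht2 => ?_, fun t m he ht i hi => ?_⟩
    · have : t = v := ht2.eq_of_length (le_antisymm ht2.length_le ht1.length_le)
      subst this; exact hVt _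
    · exfalso
      have := ht.length_le
      rw [he] at this
      simp at this
  obtain ⟨O1, hO1, hO1s, hO1t⟩ := open_ext p hU
  refine ⟨O ∩ O1, Set.inter_subset_left, hO.inter hO1, ⟨pt p t0, ht0, hO1t ⟨_, ht0U, rfl⟩⟩, ?_⟩
  rw [Set.disjoint_right]
  rintro _ ⟨k, rfl⟩ ⟨-, hk⟩
  have hk := hO1s hk
  -- points of closure U in an open set
  have hmeet : ∀ G : Set (X p), IsOpen G → x k ∈ G → ∃ u : List S, mk p u ∈ U ∧ pt p u ∈ G := by
    intro G hG hxG
    obtain ⟨_, h1, u, h2, rfl⟩ := mem_closure_iff.1 hk G hG hxG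
    exact ⟨u, h2, h1⟩
  have step : ∀ t, mk p t ∈ U → x k ∈ W t → ∃ m, mk p (m :: t) ∈ U ∧ x k ∈ W (m :: t) := by
    intro t htU hxt
    have : x k ∈ closure (V t) := by
      rw [mem_closure_iff]
      intro G hG hxG
      obtain ⟨u, hu1, hu2⟩ := hmeet (G ∩ W t) (hG.inter (hWc t).isOpen) ⟨hxG, hxt⟩
      refine ⟨pt p u, hu2.1, ?_⟩
      exact (hu1.2 u hu1.1 List.suffix_rfl).1 t htU.1 ((hW _ _).1 hu2.2)
    obtain ⟨m, hm⟩ := hVx t k this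
    obtain ⟨u, hu1, hu2⟩ := hmeet _ (hWc (m :: t)).isOpen hm
    have hu2 := (hW _ _).1 hu2
    exact ⟨m, ⟨List.IsSuffix.trans htU.1 (List.suffix_cons _ _),
      fun v hv1 hv2 => hu1.2 v hv1 (List.IsSuffix.trans hv2 hu2)⟩, hm⟩
  have climb : ∀ j, ∃ t, j ≤ t.length ∧ mk p t ∈ U ∧ x k ∈ W t := by
    intro j
    induction j with
    | zero =>
      refine ⟨t0, Nat.zero_le _, ht0U, ?_⟩
      have : closure (stoneCechUnit '' U) ⊆ W t0 := by
        refine closure_minimal ?_ (hWc t0).isClosed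
        rintro _ ⟨u, hu, rfl⟩
        exact (hW t0 u).2 hu.1
      exact this hk
    | succ j ih =>
      obtain ⟨t, h1, h2, h3⟩ := ih
      obtain ⟨m, h4, h5⟩ := step t h2 h3
      exact ⟨m :: t, by simpa using h1, h4, h5⟩
  obtain ⟨t, h1, h2, h3⟩ := climb k
  obtain ⟨m, h4, h5⟩ := step t h2 h3
  exact (h4.2 (m :: t) h4.1 List.suffix_rfl).2 t m rfl h2.1 k h1 h5


lemma L2 [Countable S] {p p' : List S → Ultrafilter S} (hp : Good p) (hp' : Good p')
    (h : X p ≃ₜ X p') {s t : List S} (hst : h (pt p s) = pt p' t) :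
    ∃ g : S → S, (p s).map g = p' t := by
  classical
  have hts : h.symm (pt p' t) = pt p s := by rw [← hst]; simp
  have ne1 : ∀ n, n :: s ≠ s := fun n hn => by
    have := congrArg List.length hn
    simp at this
  have ne2 : ∀ n, n :: t ≠ t := fun n hn => by
    have := congrArg List.length hn
    simp at this
  have tend1 : Tendsto (fun n => h (pt p (n :: s))) (p s) (𝓝 (pt p' t)) := by
    rw [← hst]; exact (h.continuous.tendsto _).comp (tendsto_pt p s)
  have tend2 : Tendsto (fun m => h.symm (pt p' (m :: t))) (p' t) (𝓝 (pt p s)) := by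
    rw [← hts]; exact (h.symm.continuous.tendsto _).comp (tendsto_pt p' t)
  -- eventually a child
  have main : ∀ᶠ n in (p s : Filter S), h (pt p (n :: s)) ∈ Y p' t := by
    by_contra hcon
    have hN0 : ∀ᶠ n in (p s : Filter S), h (pt p (n :: s)) ∉ Y p' t :=
      Ultrafilter.eventually_not.2 hcon
    have hN1 : ∀ᶠ n in (p s : Filter S),
        ¬ (h (pt p (n :: s)) ∈ closure (Y p' t) ∧ h (pt p (n :: s)) ∉ Y p' t) := by
      rw [Ultrafilter.eventually_not]
      intro hc
      refine weakP_X hp' t ((fun n => h (pt p (n :: s))) '' {n | h (pt p (n :: s)) ∈ closure (Y p' t) ∧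
        h (pt p (n :: s)) ∉ Y p' t}) ((Set.to_countable _).image _) ?_ ?_
      · rintro _ ⟨n, hn, rfl⟩
        refine ⟨hn.1, hn.2, fun he => ne1 n ?_⟩
        rw [← hst] at he
        exact pt_injective hp (h.injective he)
      · refine mem_closure_of_tendsto tend1 ?_
        filter_upwards [hc] with n hn using ⟨n, hn, rfl⟩
    have hM1 : ∀ᶠ m in (p' t : Filter S),
        ¬ (h.symm (pt p' (m :: t)) ∈ closure (Y p s) ∧ h.symm (pt p' (m :: t)) ∉ Y p s) := by
      rw [Ultrafilter.eventually_not]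
      intro hc
      refine weakP_X hp s ((fun m => h.symm (pt p' (m :: t))) ''
        {m | h.symm (pt p' (m :: t)) ∈ closure (Y p s) ∧
        h.symm (pt p' (m :: t)) ∉ Y p s}) ((Set.to_countable _).image _) ?_ ?_
      · rintro _ ⟨n, hn, rfl⟩
        refine ⟨hn.1, hn.2, fun he => ne2 n ?_⟩
        rw [← hts] at he
        exact pt_injective hp' (h.symm.injective he)
      · refine mem_closure_of_tendsto tend2 ?_
        filter_upwards [hc] with n hn using ⟨n, hn, rfl⟩
    obtain ⟨W, hWc, hW⟩ := exists_W hp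
    have hNN := hN0.and hN1
    set N := {n | h (pt p (n :: s)) ∉ Y p' t ∧
      ¬ (h (pt p (n :: s)) ∈ closure (Y p' t) ∧ h (pt p (n :: s)) ∉ Y p' t)} with hN
    set M := {m | ¬ (h.symm (pt p' (m :: t)) ∈ closure (Y p s) ∧
      h.symm (pt p' (m :: t)) ∉ Y p s)} with hM
    have dis := sep (D := (fun n => h (pt p (n :: s))) '' N) (E := (fun m => pt p' (m :: t)) '' M)
      ((Set.to_countable _).image _) ((Set.to_countable _).image _) (by
        rintro _ ⟨n, hn, rfl⟩ hcl
        refine hn.2 ⟨closure_mono ?_ hcl, hn.1⟩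
        rintro _ ⟨m, -, rfl⟩
        exact ⟨m, rfl⟩) (by
        rintro _ ⟨m, hm, rfl⟩ hcl
        have h1 : h.symm (pt p' (m :: t)) ∈ closure (Y p s) := by
          rw [mem_closure_iff]
          intro G hG hxG
          obtain ⟨_, hy1, n, hn, rfl⟩ := mem_closure_iff.1 hcl (h.symm ⁻¹' G)
            (hG.preimage h.symm.continuous) hxG
          refine ⟨pt p (n :: s), ?_, n, rfl⟩
          simpa using hy1
        have h2 : h.symm (pt p' (m :: t)) ∈ Y p s := by
          by_contra h2
          exact hm ⟨h1, h2⟩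
        obtain ⟨n', hn'⟩ := h2
        have hn'2 : h (pt p (n' :: s)) = pt p' (m :: t) := by
          have := congrArg h hn'
          simpa using this
        obtain ⟨_, hy1, n, hn, rfl⟩ := mem_closure_iff.1 hcl (h.symm ⁻¹' W (n' :: s))
          ((hWc _).isOpen.preimage h.symm.continuous) (by
            change h.symm (pt p' (m :: t)) ∈ W (n' :: s)
            rw [← hn']
            exact (hW _ _).2 List.suffix_rfl)
        have hy2 : pt p (n :: s) ∈ W (n' :: s) := by simpa using hy1
        have hnn : n' = n := suffix_cons_cons ((hW _ _).1 hy2) List.suffix_rfl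
        subst hnn
        exact hn.1 ⟨m, hn'2.symm⟩)
    have c1 : pt p' t ∈ closure ((fun n => h (pt p (n :: s))) '' N) := by
      refine mem_closure_of_tendsto tend1 ?_
      filter_upwards [hNN] with n hn using ⟨n, hn, rfl⟩
    have c2 : pt p' t ∈ closure ((fun m => pt p' (m :: t)) '' M) := by
      refine mem_closure_of_tendsto (tendsto_pt p' t) ?_
      filter_upwards [hM1] with n hn using ⟨n, hn, rfl⟩
    exact Set.disjoint_left.1 dis c1 c2
  let g : S → S := fun n => if hn : h (pt p (n :: s)) ∈ Y p' t then hn.choose else n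
  have hg : ∀ᶠ n in (p s : Filter S), h (pt p (n :: s)) = pt p' (g n :: t) := by
    filter_upwards [main] with n hn
    have : g n = Exists.choose hn := dif_pos hn
    rw [this]
    exact (Exists.choose_spec hn).symm
  refine ⟨g, ?_⟩
  apply Ultrafilter.coe_le_coe.1
  intro C hC
  obtain ⟨f, hf, hft, hfm⟩ := exists_proj hp' t
  have hopen : IsOpen (f ⁻¹' {q | C ∈ q}) := (ultrafilter_isOpen_basic C).preimage hf
  have hmem : pt p' t ∈ f ⁻¹' {q | C ∈ q} := by
    change C ∈ f (pt p' t)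
    rw [hft]; exact hC
  have ev := tend1 (hopen.mem_nhds hmem)
  change g ⁻¹' C ∈ (p s : Filter S)
  filter_upwards [ev, hg] with n h1 h2
  have h1 : C ∈ f (h (pt p (n :: s))) := h1
  rw [h2, hfm] at h1
  simpa using h1

/-- Mutual Rudin-Keisler reducibility. -/
def R (p q : Ultrafilter S) : Prop := (∃ f : S → S, p.map f = q) ∧ ∃ g : S → S, q.map g = p

lemma main [Countable S] {p p' : List S → Ultrafilter S} (hp : Good p) (hp' : Good p')
    (h : X p ≃ₜ X p') (A : Set (X p)) (hA : IsOpen A) (hne : A.Nonempty) :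
    ∃ s t, pt p s ∈ A ∧ h (pt p s) = pt p' t ∧ R (p s) (p' t) := by
  have : ∃ s t, pt p s ∈ A ∧ h (pt p s) = pt p' t := by
    by_contra hcon
    push Not at hcon
    obtain ⟨O', hO's, hO', hO'ne, hdis⟩ := L3 hp' (h '' (A ∩ Set.range (pt p)))
      (((Set.countable_range (pt p)).mono Set.inter_subset_right).image h) (by
        rintro t ⟨_, ⟨hx, s, rfl⟩, hs⟩
        exact hcon s t hx hs) (h '' A) (h.isOpenMap A hA) (hne.image h)
    obtain ⟨y, hy⟩ := hO'ne
    obtain ⟨s, hs⟩ := open_inter_pt p (hO'.preimage h.continuous) ⟨h.symm y, by simpa using hy⟩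
    have hs' : h (pt p s) ∈ O' := hs
    obtain ⟨x, hx, hxs⟩ := hO's hs'
    have := h.injective hxs
    subst this
    exact Set.disjoint_left.1 hdis hs' ⟨_, ⟨hx, s, rfl⟩, rfl⟩
  obtain ⟨s, t, h1, h2⟩ := this
  refine ⟨s, t, h1, h2, L2 hp hp' h h2, L2 hp' hp h.symm ?_⟩
  rw [← h2]; simp

lemma rigid [Countable S] (hp : Good p) (hR : ∀ s t, s ≠ t → ¬ R (p s) (p t)) (h : X p ≃ₜ X p) :
    h = Homeomorph.refl _ := by
  by_contra hcon
  have hopen : IsOpen {x | h x ≠ x} := isOpen_ne_fun h.continuous continuous_id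
  have hne : {x | h x ≠ x}.Nonempty := by
    by_contra hne
    apply hcon
    ext x
    by_contra hx
    exact hne ⟨x, hx⟩
  obtain ⟨s, t, h1, h2, h3⟩ := main hp hp h _ hopen hne
  refine hR s t ?_ h3
  rintro rfl
  exact h1 h2

lemma x_infinite [Infinite S] (hp : Good p) : Infinite (X p) :=
  Infinite.of_injective _ (pt_injective hp)

end TreeSpace

namespace Codes
open Filter Topology

/-- a ring hom between rings of real functions is a star algebra hom -/
noncomputable def toStar {X Y : Type*} [TopologicalSpace X] [TopologicalSpace Y]
    (e : C(X, ℝ) →+* C(Y, ℝ)) : C(X, ℝ) →⋆ₐ[ℝ] C(Y, ℝ) :=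
  { e with
    commutes' := by
      intro r
      ext y
      let φ : ℝ →+* ℝ := ((Pi.evalRingHom (fun _ : Y => ℝ) y).comp
        (ContinuousMap.coeFnRingHom : C(Y, ℝ) →+* (Y → ℝ))).comp (e.comp (algebraMap ℝ C(X, ℝ)))
      have h : φ = RingHom.id ℝ := Subsingleton.elim _ _
      have h2 := congrArg (fun ψ : ℝ →+* ℝ => ψ r) h
      exact h2
    map_star' := by
      intro f
      have h1 : star f = f := by ext x; simp
      have h2 : star (e f) = e f := by ext x; simp
      change e (star f) = star (e f)
      rw [h1, h2] }

lemma homeo_of_ringEquiv {X Y : Type*} [TopologicalSpace X] [TopologicalSpace Y]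
    [CompactSpace X] [CompactSpace Y] [T2Space X] [T2Space Y]
    (e : C(X, ℝ) ≃+* C(Y, ℝ)) : Nonempty (X ≃ₜ Y) := by
  let a := WeakDual.CharacterSpace.compContinuousMap (toStar e.toRingHom)
  let b := WeakDual.CharacterSpace.compContinuousMap (toStar e.symm.toRingHom)
  have hab : ∀ x, a (b x) = x := by
    intro x
    ext f
    change x (e.symm (e f)) = x f
    simp
  have hba : ∀ x, b (a x) = x := by
    intro x
    ext f
    change x (e (e.symm f)) = x f
    simp
  let h : WeakDual.characterSpace ℝ C(X, ℝ) ≃ₜ WeakDual.characterSpace ℝ C(Y, ℝ) :=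
    { toFun := b, invFun := a, left_inv := hab, right_inv := hba,
      continuous_toFun := b.continuous, continuous_invFun := a.continuous }
  exact ⟨((WeakDual.CharacterSpace.homeoEval X ℝ).trans h).trans
    (WeakDual.CharacterSpace.homeoEval Y ℝ).symm⟩

lemma mem_compactIdeal {E : Type*} [NormedAddCommGroup E] [NormedSpace ℝ E] (f : E →L[ℝ] E) :
    f ∈ compactIdeal ℝ E ↔ IsCompactOperator f := by
  exact TwoSidedIdeal.mem_mk' _ _ _ _ _ _ f

/-- conjugation -/
noncomputable def conj {E F : Type*} [NormedAddCommGroup E] [NormedSpace ℝ E]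
    [NormedAddCommGroup F] [NormedSpace ℝ F] (e : E ≃L[ℝ] F) : (E →L[ℝ] E) ≃+* (F →L[ℝ] F) where
  toFun f := (e : E →L[ℝ] F).comp (f.comp (e.symm : F →L[ℝ] E))
  invFun f := (e.symm : F →L[ℝ] E).comp (f.comp (e : E →L[ℝ] F))
  left_inv f := by ext x; simp
  right_inv f := by ext x; simp
  map_mul' f g := by ext x; simp
  map_add' f g := by ext x; simp

lemma calkin_congr {E F : Type*} [NormedAddCommGroup E] [NormedSpace ℝ E]
    [NormedAddCommGroup F] [NormedSpace ℝ F] (e : E ≃L[ℝ] F) :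
    Nonempty (Calkin ℝ E ≃+* Calkin ℝ F) := by
  refine ⟨RingCon.congr (conj e) ?_⟩
  ext f g
  rw [TwoSidedIdeal.rel_iff, mem_compactIdeal]
  change _ ↔ (compactIdeal ℝ F).ringCon (conj e f) (conj e g)
  rw [TwoSidedIdeal.rel_iff, mem_compactIdeal, ← map_sub]
  generalize f - g = k
  constructor
  · intro h
    exact (h.comp_clm (e.symm : F →L[ℝ] E)).clm_comp (e : E →L[ℝ] F)
  · intro h
    have h2 := (h.comp_clm (e : E →L[ℝ] F)).clm_comp (e.symm : F →L[ℝ] E)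
    have h3 : ((e.symm : F →L[ℝ] E) : F → E) ∘ (conj e k : F → F) ∘ ((e : E →L[ℝ] F) : E → F)
        = (k : E → E) := by
      funext x
      simp [conj]
    rw [← h3]
    exact h2

/-- Rational combinations of the dense sequence -/
noncomputable def comb (E : Type*) [NormedAddCommGroup E] [NormedSpace ℝ E] [SeparableSpace E] :
    (ℕ →₀ ℚ) →+ E :=
  Finsupp.liftAddHom fun i =>
    ((AddMonoidHom.flip (smulAddHom ℝ E) (denseSeq E i)).comp (Rat.castHom ℝ).toAddMonoidHom)

lemma comb_single (E : Type*) [NormedAddCommGroup E] [NormedSpace ℝ E] [SeparableSpace E] (i : ℕ) :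
    comb E (Finsupp.single i 1) = denseSeq E i := by
  simp [comb]

lemma comb_dense (E : Type*) [NormedAddCommGroup E] [NormedSpace ℝ E] [SeparableSpace E] :
    DenseRange (comb E) := by
  refine (denseRange_denseSeq E).mono ?_
  rintro _ ⟨i, rfl⟩
  exact ⟨_, comb_single E i⟩

/-- The code of a separable Banach space -/
noncomputable def code (E : Type*) [NormedAddCommGroup E] [NormedSpace ℝ E] [SeparableSpace E] :
    (ℕ →₀ ℚ) → ℝ := fun a => ‖comb E a‖

lemma equiv_of_code {E F : Type*} [NormedAddCommGroup E] [NormedSpace ℝ E] [SeparableSpace E]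
    [CompleteSpace E] [NormedAddCommGroup F] [NormedSpace ℝ F] [SeparableSpace F] [CompleteSpace F]
    (h : code E = code F) : Nonempty (E ≃L[ℝ] F) := by
  let : PseudoMetricSpace (ℕ →₀ ℚ) := PseudoMetricSpace.induced (comb E) inferInstance
  have iE : Isometry (comb E) := Isometry.of_dist_eq fun a b => rfl
  have iF : Isometry (comb F) := Isometry.of_dist_eq fun a b => by
    change _ = dist (comb E a) (comb E b)
    rw [dist_eq_norm, dist_eq_norm, ← map_sub, ← map_sub]
    exact (congrFun h (a - b)).symm
  let cE : AbstractCompletion (ℕ →₀ ℚ) :=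
    ⟨E, comb E, inferInstance, inferInstance, inferInstance, iE.isUniformInducing, comb_dense E⟩
  let cF : AbstractCompletion (ℕ →₀ ℚ) :=
    ⟨F, comb F, inferInstance, inferInstance, inferInstance, iF.isUniformInducing, comb_dense F⟩
  let e : E ≃ᵤ F := cE.compareEquiv cF
  have he : ∀ a, e (comb E a) = comb F a := fun a => cE.compare_coe cF a
  have hadd : ∀ x y, e (x + y) = e x + e y := by
    intro x y
    refine (comb_dense E).induction_on₂ (p := fun x y => e (x + y) = e x + e y) ?_ ?_ x y
    · have := e.continuous
      exact isClosed_eq (by fun_prop) (by fun_prop)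
    · intro a b
      rw [← map_add, he, he, he, map_add]
  let f : E →+ F := AddMonoidHom.mk' e hadd
  let L : E →L[ℝ] F := f.toRealLinearMap e.continuous
  refine ⟨{ L with
    invFun := e.symm
    left_inv := fun x => e.symm_apply_apply x
    right_inv := fun x => e.apply_symm_apply x
    continuous_toFun := e.continuous
    continuous_invFun := e.symm.continuous }⟩

end Codes

namespace Final
open Kunen TreeSpace

lemma infinite_S : Infinite Kunen.S :=
  Infinite.of_injective (fun k : ℕ => (⟨k, fun _ => ∅⟩ : Kunen.S)) fun a b h => congrArg Sigma.fst h

/-- free weak P-points -/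
abbrev WP : Type := {p : Ultrafilter Kunen.S // (p : Filter Kunen.S) ≤ Filter.cofinite ∧ WeakP p}

/-- mutual reducibility -/
def wpSetoid : Setoid WP where
  r a b := R a.1 b.1
  iseqv := by
    refine ⟨fun a => ⟨⟨id, Ultrafilter.map_id _⟩, ⟨id, Ultrafilter.map_id _⟩⟩, fun h => ⟨h.2, h.1⟩, ?_⟩
    rintro a b c ⟨⟨f, hf⟩, ⟨g, hg⟩⟩ ⟨⟨f', hf'⟩, ⟨g', hg'⟩⟩
    refine ⟨⟨f' ∘ f, ?_⟩, ⟨g ∘ g', ?_⟩⟩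
    · rw [← hf', ← hf, Ultrafilter.map_map]
    · rw [← hg, ← hg', Ultrafilter.map_map]

lemma wp_large : 𝔠 < #WP := by
  by_contra hcon
  rw [not_lt, ← mk_cantor] at hcon
  have : Infinite Kunen.S := infinite_S
  obtain ⟨p0, h1, h2, -⟩ := exists_weakP (fun _ => pure (Classical.arbitrary Kunen.S))
  have hne : Nonempty WP := ⟨⟨p0, h1, h2⟩⟩
  obtain ⟨f⟩ := (Cardinal.le_def _ _).1 hcon
  obtain ⟨p, h3, h4, h5⟩ := exists_weakP (fun c => (Function.invFun f c).1)
  apply h5 (f ⟨p, h3, h4⟩)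
  rw [Function.leftInverse_invFun f.injective]

/-- the index set -/
abbrev Qt : Type := Quotient wpSetoid

lemma qt_large : 𝔠 < #Qt := by
  by_contra hcon
  rw [not_lt] at hcon
  have h1 : ∀ a : WP, ∃ f : Kunen.S → Kunen.S, (Quotient.out (Quotient.mk wpSetoid a)).1.map f = a.1 := by
    intro a
    have h : R (Quotient.out (Quotient.mk wpSetoid a)).1 a.1 := Quotient.mk_out (s := wpSetoid) a
    exact h.1
  choose f hf using h1
  have hinj : Function.Injective (fun a : WP => (Quotient.mk wpSetoid a, f a)) := by
    intro a b hab
    have h2 : Quotient.mk wpSetoid a = Quotient.mk wpSetoid b := congrArg Prod.fst hab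
    have h3 : f a = f b := congrArg Prod.snd hab
    apply Subtype.ext
    rw [← hf a, ← hf b, h2, h3]
  have h4 := Cardinal.mk_le_of_injective hinj
  have h5 : #(Kunen.S → Kunen.S) ≤ 𝔠 := by
    have : #Kunen.S ≤ ℵ₀ := Cardinal.mk_le_aleph0
    have : Infinite Kunen.S := infinite_S
    have e : #Kunen.S = ℵ₀ := Cardinal.mk_eq_aleph0 _
    rw [← Cardinal.power_def, e, Cardinal.aleph0_power_aleph0]
  have h6 : #(Qt × (Kunen.S → Kunen.S)) ≤ 𝔠 := by
    rw [Cardinal.mk_prod, Cardinal.lift_id, Cardinal.lift_id]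
    calc #Qt * #(Kunen.S → Kunen.S) ≤ 𝔠 * 𝔠 := mul_le_mul' hcon h5
      _ = 𝔠 := Cardinal.continuum_mul_self
  exact absurd wp_large (not_lt.2 (h4.trans h6))

lemma exists_family : ∃ P : Qt → List Kunen.S → Ultrafilter Kunen.S, (∀ i, Good (P i)) ∧
    ∀ i j s t, R (P i s) (P j t) → i = j ∧ s = t := by
  have h : #(Qt × List Kunen.S) ≤ #Qt := by
    rw [Cardinal.mk_prod, Cardinal.lift_id, Cardinal.lift_id]
    have : ℵ₀ ≤ #Qt := Cardinal.aleph0_le_continuum.trans qt_large.le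
    calc #Qt * #(List Kunen.S) ≤ #Qt * ℵ₀ := mul_le_mul' le_rfl Cardinal.mk_le_aleph0
      _ = #Qt := Cardinal.mul_aleph0_eq this
  obtain ⟨φ⟩ := (Cardinal.le_def _ _).1 h
  refine ⟨fun i s => (Quotient.out (φ (i, s))).1, fun i s => (Quotient.out (φ (i, s))).2, ?_⟩
  intro i j s t hR
  have h1 : φ (i, s) = φ (j, t) := Quotient.out_equiv_out.1 hR
  have h2 := φ.injective h1
  exact ⟨congrArg Prod.fst h2, congrArg Prod.snd h2⟩

lemma mk_code : #((ℕ →₀ ℚ) → ℝ) = 𝔠 := by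
  have e : #(ℕ →₀ ℚ) = ℵ₀ := Cardinal.mk_eq_aleph0 _
  rw [← Cardinal.power_def, e, Cardinal.mk_real, Cardinal.continuum_power_aleph0]

end Final

/-- There exists an infinite compact Hausdorff space `X` which is separable, extremally
disconnected, and rigid (the identity is the only self-homeomorphism of `X`), such that for
every separable real Banach space `E`, the Banach algebra `C(X, ℝ)` is not isomorphic as a
ring to the Calkin algebra `B(E)/K(E)`. -/
theorem statement4 :
    ∃ X : CompHaus.{u},
      Infinite X ∧ SeparableSpace X ∧ ExtremallyDisconnected X ∧
      (∀ e : X ≃ₜ X, e = Homeomorph.refl X) ∧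
      ∀ (E : Type u) [NormedAddCommGroup E] [NormedSpace ℝ E] [CompleteSpace E],
        SeparableSpace E →
        IsEmpty (C(X, ℝ) ≃+* Calkin ℝ E) := by
  classical
  obtain ⟨P, hG, hR⟩ := Final.exists_family
  by_contra hcon
  push Not at hcon
  have key : ∀ i : Final.Qt, ∃ c : (ℕ →₀ ℚ) → ℝ, ∃ (E : Type u) (_ : NormedAddCommGroup E)
      (_ : NormedSpace ℝ E) (_ : CompleteSpace E) (_ : SeparableSpace E),
      Nonempty (C(ULift.{u} (TreeSpace.X (P i)), ℝ) ≃+* Calkin ℝ E) ∧ Codes.code E = c := by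
    intro i
    have : Infinite Kunen.S := Final.infinite_S
    have hinf : Infinite (TreeSpace.X (P i)) := TreeSpace.x_infinite (hG i)
    let u : ULift.{u} (TreeSpace.X (P i)) ≃ₜ TreeSpace.X (P i) := Homeomorph.ulift
    obtain ⟨E, i1, i2, i3, hE, ⟨e⟩⟩ := hcon (CompHaus.of (ULift.{u} (TreeSpace.X (P i))))
      (Infinite.of_injective u.symm u.symm.injective)
      (u.symm.surjective.denseRange.separableSpace u.symm.continuous)
      (extremallyDisconnected_of_homeo u.symm)
      (by
        intro e
        have h1 := TreeSpace.rigid (hG i) (fun s t hst h => hst (hR _ _ _ _ h).2)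
          ((u.symm.trans e).trans u)
        refine Homeomorph.ext fun x => ?_
        have h2 : u (e (u.symm (u x))) = u x := congrArg (fun h : _ ≃ₜ _ => h (u x)) h1
        rw [u.symm_apply_apply] at h2
        exact u.injective h2)
    exact ⟨_, E, i1, i2, i3, hE, ⟨e⟩, rfl⟩
  choose c hc using key
  have hni : ¬ Function.Injective c := by
    intro hinj
    have := Cardinal.mk_le_of_injective hinj
    rw [Final.mk_code] at this
    exact absurd Final.qt_large (not_lt.2 this)
  apply hni
  intro i j hij
  obtain ⟨E, i1, i2, i3, i4, ⟨e⟩, he⟩ := hc i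
  obtain ⟨F, j1, j2, j3, j4, ⟨f⟩, hf⟩ := hc j
  obtain ⟨g⟩ := Codes.equiv_of_code (E := E) (F := F) (he.trans (hij.trans hf.symm))
  obtain ⟨k⟩ := Codes.calkin_congr g
  obtain ⟨h⟩ := Codes.homeo_of_ringEquiv ((e.trans k).trans f.symm)
  obtain ⟨s, t, -, -, hst⟩ := TreeSpace.main (hG i) (hG j)
    ((Homeomorph.ulift.symm.trans h).trans Homeomorph.ulift) Set.univ isOpen_univ
    ⟨TreeSpace.pt _ [], trivial⟩
  exact (hR _ _ _ _ hst).1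
end
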